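/- arXiv:2109.07659 — 4 statements merged into one kernel-verified Lean document; each statement's English description precedes it below -/
import Mathlib

section
/- (Macchi) Let M be a positive integer, L an M×M complex matrix, and z a complex number such that I_M + zL is invertible. Set K = zL(I_M + zL)^{-1}. Then for every subset S of {1,...,M}, the k-point correlation of the L-ensemble equals a determinant of the kernel matrix: Σ_{T : S ⊆ T ⊆ {1,...,M}} z^{|T|} det(L_T) / det(I_M + zL) = det(K_S). -/
/-!
Write `A = zL` and let `P` be the matrix whose rows in `S` are those of `A` and whose other rows are
those of `1 + A`. Expanding `det P` by multilinearity in the rows gives `∑_{T ⊇ S} det A_T`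
(`sum_det_submatrix_eq_det_piecewise`). Since `K (1 + A) = A`, the matrix `P` is the product of
`1 + A` with the matrix that has the rows of `K` in `S` and those of the identity elsewhere; the
latter has determinant `det K_S`, so `det P = det K_S * det (1 + A)`.
-/

/-- Expansion along rows: `A` is split off from every row, and the remainder is `0` on `S` and the
identity elsewhere, so only the sets `T ⊇ S` contribute. -/
theorem sum_det_submatrix_eq_det_piecewise {n R : Type*} [Fintype n] [DecidableEq n] [CommRing R]
    (A : Matrix n n R) (S : Finset n) :
    ∑ T ∈ Finset.univ.filter (fun T : Finset n => S ⊆ T),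
        (A.submatrix (fun i : {x : n // x ∈ T} => (i : n))
          (fun i : {x : n // x ∈ T} => (i : n))).det
      = (Matrix.of (S.piecewise A.row (1 + A).row)).det := by
  have h := (Matrix.detRowAlternating (n := n) (R := R)).toMultilinearMap.map_add_univ
    A.row (S.piecewise (0 : Matrix n n R).row (1 : Matrix n n R).row)
  have hP : Matrix.of (S.piecewise A.row (1 + A).row)
      = Matrix.of (A.row + S.piecewise (0 : Matrix n n R).row (1 : Matrix n n R).row) := by
    ext i j
    by_cases hi : i ∈ S <;> simp [hi, Matrix.add_apply, add_comm]
  rw [hP]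
  refine Eq.trans ?_ h.symm
  rw [Finset.sum_filter]
  refine Finset.sum_congr rfl fun T _ => ?_
  split_ifs with hST
  · refine (Matrix.det_piecewise_one_eq_submatrix_det A T).symm.trans ?_
    refine congrArg Matrix.det ?_
    ext i j
    by_cases hi : i ∈ T
    · simp [hi]
    · have hi' : i ∉ S := fun h => hi (hST h)
      simp [hi, hi']
  · obtain ⟨i, hiS, hiT⟩ := Finset.not_subset.mp hST
    refine (Matrix.det_eq_zero_of_row_eq_zero i fun j => ?_).symm
    simp [hiS, hiT]

/-- Macchi: if `I + zL` is invertible and `K = zL(I + zL)⁻¹`, then for every subset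
`S`, the `k`-point correlation of the `L`-ensemble, i.e. the sum over subsets `T ⊇ S` of
`z^|T| det L_T / det (I + zL)`, equals `det K_S`. -/
theorem L_ensemble_correlation_det (M : ℕ) (hM : 0 < M)
    (L : Matrix (Fin M) (Fin M) ℂ) (z : ℂ)
    (hunit : IsUnit (1 + z • L))
    (K : Matrix (Fin M) (Fin M) ℂ) (hK : K = z • L * (1 + z • L)⁻¹)
    (S : Finset (Fin M)) :
    (∑ T ∈ Finset.univ.filter (fun T : Finset (Fin M) => S ⊆ T),
        z ^ T.card *
          (L.submatrix (fun i : {x : Fin M // x ∈ T} => (i : Fin M))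
            (fun i : {x : Fin M // x ∈ T} => (i : Fin M))).det) / (1 + z • L).det
      = (K.submatrix (fun i : {x : Fin M // x ∈ S} => (i : Fin M))
          (fun i : {x : Fin M // x ∈ S} => (i : Fin M))).det := by
  have hA : K * (1 + z • L) = z • L := by
    rw [hK, Matrix.mul_assoc, Matrix.nonsing_inv_mul _ ((Matrix.isUnit_iff_isUnit_det _).mp hunit),
      Matrix.mul_one]
  have hP : Matrix.of (S.piecewise (z • L).row (1 + z • L).row)
      = Matrix.of (S.piecewise K.row (1 : Matrix (Fin M) (Fin M) ℂ).row)
        * (1 + z • L) := by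
    ext i j
    by_cases hi : i ∈ S
    · have h := congrFun (congrFun hA i) j
      rw [Matrix.mul_apply] at h ⊢
      simp only [Matrix.of_apply, Finset.piecewise_eq_of_mem _ _ _ hi]
      exact h.symm
    · have h := congrFun (congrFun (Matrix.one_mul (1 + z • L)) i) j
      rw [Matrix.mul_apply] at h ⊢
      simp only [Matrix.of_apply, Finset.piecewise_eq_of_notMem _ _ _ hi]
      exact h.symm
  have hdet : (1 + z • L).det ≠ 0 := ((Matrix.isUnit_iff_isUnit_det _).mp hunit).ne_zero
  rw [div_eq_iff hdet]
  have hS := Matrix.det_piecewise_one_eq_submatrix_det K S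
  have key := sum_det_submatrix_eq_det_piecewise (z • L) S
  rw [hP, Matrix.det_mul] at key
  refine Eq.trans (Finset.sum_congr rfl fun T _ => ?_)
    (key.trans (congrArg (· * (1 + z • L).det) hS))
  rw [Matrix.submatrix_smul, Pi.smul_apply, Pi.smul_apply, Matrix.det_smul, Fintype.card_coe]
end

section
/- (Lattice thermodynamic limit of the pressure) Let g : ℝ → ℝ be even and continuous with |g(u)| ≤ C/(1+u²) for some constant C > 0, let τ > 0, and define f^∞(t) := Σ_{s∈ℤ} g(τs) e^{2πist} (the sum converges absolutely and f^∞ is real-valued and continuous since g is even). Assume f^∞(t) ≥ 0 for all t, and let z > 0. For each positive integer M let L^{(M)} be the M×M circulant matrix with entries L^{(M)}(j,l) = g( (τM/π) sin(π(j−l)/M) ). Then lim_{M→∞} (1/M) log |det(I_M + z L^{(M)})| = ∫_{−1/2}^{1/2} log(1 + z f^∞(t)) dt. -/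
/-!
The matrix `L^{(M)}` is circulant (this uses that `g` is even, as `sin` changes sign under a shift
of its argument by `π`), so the Fourier modes diagonalize it and
`det (1 + z L^{(M)}) = ∏_m (1 + z λ_M(m / M))`, where `λ_M(t) = ∑_s a_M(s) e^{2πist}` runs over a
symmetric window of residues modulo `M` and `a_M(s) = g ((τ M / π) sin (π s / M))`
(`det_one_add_circulant`).

On that window Jordan's inequality `|sin x| ≥ 2|x|/π` bounds `a_M(s)` by a summable function of `s`
that does not depend on `M`, and `a_M(s) → g (τ s)` for each fixed `s`. By dominated convergence
`∑_s |a_M(s) - g (τ s)| → 0`, with `a_M` extended by zero outside the window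
(`tendsto_tsum_window`). This sum bounds `|λ_M(t) - f^∞(t)|` uniformly in `t`
(`norm_windowSymbol_sub_le`). Since `1 + z f^∞ ≥ 1`, the logarithm is Lipschitz near the relevant
values, so `(1/M) log |det|` differs by `o(1)` from the Riemann sum of `log (1 + z f^∞)` over
`[0, 1]`. That function is continuous and `1`-periodic, so the Riemann sums converge to its
integral over `[-1/2, 1/2]`.
-/

open MeasureTheory Filter Topology

/-- The sum of an `M`-periodic function over `M` consecutive integers does not depend on where
they start. -/
lemma sum_range_shift_of_periodic {M : ℕ} {h : ℤ → ℂ} (hper : ∀ k, h (k + M) = h k) (n m : ℤ) :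
    ∑ i ∈ Finset.range M, h (n + i) = ∑ i ∈ Finset.range M, h (m + i) := by
  have step : ∀ n : ℤ, ∑ i ∈ Finset.range M, h (n + 1 + i) = ∑ i ∈ Finset.range M, h (n + i) := by
    intro n
    have h1 := Finset.sum_range_succ (fun i : ℕ => h (n + i)) M
    have h2 := Finset.sum_range_succ' (fun i : ℕ => h (n + i)) M
    rw [h1] at h2
    simp only [Nat.cast_zero, add_zero, hper, add_left_inj, Nat.cast_add, Nat.cast_one] at h2
    rw [h2]
    exact Finset.sum_congr rfl fun i _ => by congr 1; ring
  have all : ∀ n : ℤ, ∑ i ∈ Finset.range M, h (n + i) = ∑ i ∈ Finset.range M, h (0 + i) := by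
    intro n
    induction n using Int.induction_on with
    | zero => rfl
    | succ k ih => rw [step, ih]
    | pred k ih => rw [← ih, ← step, sub_add_cancel]
  rw [all n, all m]

/-- The symmetric window `{-⌊M/2⌋, …, M - ⌊M/2⌋ - 1}` of representatives modulo `M`. -/
noncomputable def window (M : ℕ) : Finset ℤ := Finset.Ico (-((M / 2 : ℕ) : ℤ)) (M - (M / 2 : ℕ))

lemma sum_fin_sub_eq_sum_window {M : ℕ} {h : ℤ → ℂ} (hper : ∀ k, h (k + M) = h k) (j : ℤ) :
    ∑ l : Fin M, h (j - (l : ℕ)) = ∑ s ∈ window M, h s := by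
  have h1 : ∑ s ∈ window M, h s = ∑ i ∈ Finset.range M, h (-((M / 2 : ℕ) : ℤ) + i) := by
    symm
    refine Finset.sum_nbij' (fun i : ℕ => -((M / 2 : ℕ) : ℤ) + i)
      (fun s => (s + (M / 2 : ℕ)).toNat) ?_ ?_ ?_ ?_ ?_
    · intro i hi
      simp only [window, Finset.mem_Ico, Finset.mem_range] at hi ⊢
      omega
    · intro s hs
      simp only [window, Finset.mem_Ico, Finset.mem_range] at hs ⊢
      omega
    · intro i _
      simp
    · intro s hs
      simp only [window, Finset.mem_Ico] at hs ⊢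
      omega
    · exact fun _ _ => rfl
  rw [h1, Fin.sum_univ_eq_sum_range (fun i : ℕ => h (j - i)) M,
    ← Finset.sum_range_reflect, sum_range_shift_of_periodic hper _ (j - M + 1)]
  refine Finset.sum_congr rfl fun i hi => ?_
  rw [Finset.mem_range] at hi
  congr 1
  omega

/-- The trigonometric polynomial `∑_s a(s) e^{2πist}` over the symmetric window. For `M`-periodic
`a`, its values at `t = m / M` are the eigenvalues of the circulant matrix with entries
`a (j - l)`. -/
noncomputable def windowSymbol (M : ℕ) (a : ℤ → ℝ) (t : ℝ) : ℂ :=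
  ∑ s ∈ window M, (a s : ℂ) * Complex.exp (2 * Real.pi * Complex.I * (s : ℂ) * (t : ℂ))

/-- Diagonalization of a circulant matrix by the Fourier modes `l ↦ e^{-2πilm/M}`. They are the
columns of a transposed Vandermonde matrix at distinct nodes, which is therefore invertible. -/
lemma det_one_add_circulant {M : ℕ} (hM : M ≠ 0) {a : ℤ → ℝ} (hper : ∀ k, a (k + M) = a k)
    (z : ℝ) :
    (((1 + z • Matrix.of (fun j l : Fin M => a ((j : ℕ) - (l : ℕ)))).det : ℝ) : ℂ) =
      ∏ m : Fin M, (1 + z * windowSymbol M a ((m : ℕ) / M)) := by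
  have hMC : (M : ℂ) ≠ 0 := by exact_mod_cast hM
  set ω : ℂ := Complex.exp (2 * Real.pi * Complex.I / M) with hω
  have hprim : IsPrimitiveRoot ω M := Complex.isPrimitiveRoot_exp M hM
  have hω0 : ω ≠ 0 := Complex.exp_ne_zero _
  set v : Fin M → ℂ := fun m => (ω ^ (m : ℕ))⁻¹ with hv
  have hvinj : Function.Injective v := by
    intro m m' hmm
    exact Fin.ext (hprim.pow_inj m.2 m'.2 (inv_injective hmm))
  have hF : (Matrix.vandermonde v).transpose.det ≠ 0 := by
    rw [Matrix.det_transpose]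
    exact Matrix.det_vandermonde_ne_zero_iff.2 hvinj
  set A : Matrix (Fin M) (Fin M) ℂ :=
    (1 + z • Matrix.of (fun j l : Fin M => a ((j : ℕ) - (l : ℕ)))).map (algebraMap ℝ ℂ) with hA
  have hAF : A * (Matrix.vandermonde v).transpose =
      (Matrix.vandermonde v).transpose *
        Matrix.diagonal (fun m : Fin M => 1 + z * windowSymbol M a ((m : ℕ) / M)) := by
    ext j m
    rw [Matrix.mul_diagonal, Matrix.mul_apply]
    simp only [Matrix.transpose_apply, Matrix.vandermonde_apply]
    have hexp : ∀ s : ℤ, Complex.exp (2 * Real.pi * Complex.I * (s : ℂ) *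
        (((m : ℕ) / M : ℝ) : ℂ)) = (v m)⁻¹ ^ s := by
      intro s
      rw [hv, inv_inv, hω, ← Complex.exp_nat_mul, ← Complex.exp_int_mul]
      congr 1
      push_cast
      field_simp
    have hvM : (v m) ^ M = 1 := by
      rw [hv, inv_pow, ← pow_mul, mul_comm, pow_mul, hprim.pow_eq_one, one_pow, inv_one]
    have hv0 : v m ≠ 0 := by simp [hv, hω0]
    have hsum := sum_fin_sub_eq_sum_window (M := M)
      (h := fun s : ℤ => (a s : ℂ) * (v m)⁻¹ ^ s) (fun k => by
        rw [hper, zpow_add₀ (inv_ne_zero hv0), zpow_natCast, inv_pow, hvM, inv_one, mul_one])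
      (j : ℕ)
    have hws : windowSymbol M a ((m : ℕ) / M) =
        ∑ s ∈ window M, (a s : ℂ) * (v m)⁻¹ ^ s :=
      Finset.sum_congr rfl fun s _ => by rw [hexp]
    have hA' : ∀ l : Fin M, A j l * v m ^ (l : ℕ) = (if j = l then v m ^ (l : ℕ) else 0) +
        z * (v m ^ (j : ℕ) * ((a ((j : ℕ) - (l : ℕ)) : ℂ) *
          (v m)⁻¹ ^ (((j : ℕ) : ℤ) - (l : ℕ)))) := by
      intro l
      rw [zpow_sub₀ (inv_ne_zero hv0), zpow_natCast, zpow_natCast, inv_pow (v m) j, inv_pow (v m) l]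
      simp only [hA, Matrix.map_apply, Matrix.add_apply, Matrix.smul_apply, Matrix.of_apply,
        Matrix.one_apply, smul_eq_mul, Complex.coe_algebraMap, Complex.ofReal_add,
        Complex.ofReal_mul]
      split_ifs <;> push_cast <;> field_simp <;> ring
    simp_rw [hA']
    rw [Finset.sum_add_distrib, ← Finset.mul_sum, ← Finset.mul_sum, hsum, hws]
    simp
    ring
  have hdet := congrArg Matrix.det hAF
  rw [Matrix.det_mul, Matrix.det_mul, mul_comm, Matrix.det_diagonal] at hdet
  have := mul_left_cancel₀ hF hdet
  rw [← this, hA]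
  exact RingHom.map_det (algebraMap ℝ ℂ) _

lemma tendsto_riemann_sum {F : ℝ → ℝ} (hF : Continuous F) :
    Tendsto (fun M : ℕ => (1 / (M : ℝ)) * ∑ m : Fin M, F ((m : ℕ) / M)) atTop
      (𝓝 (∫ t in (0 : ℝ)..1, F t)) := by
  rw [Metric.tendsto_atTop]
  intro ε hε
  have huc := (isCompact_Icc (a := (0 : ℝ)) (b := 1)).uniformContinuousOn_of_continuous
    hF.continuousOn
  obtain ⟨δ, hδ, hδ'⟩ := Metric.uniformContinuousOn_iff.1 huc (ε / 2) (by positivity)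
  obtain ⟨N, hN⟩ := exists_nat_gt (1 / δ)
  refine ⟨N + 1, fun M hM => ?_⟩
  have hM0 : (0 : ℝ) < M := by exact_mod_cast (by omega : 0 < M)
  have hMδ : 1 / (M : ℝ) < δ := by
    rw [div_lt_comm₀ hM0 hδ]
    exact hN.trans_le (by exact_mod_cast (by omega : N ≤ M))
  have hint : ∑ m ∈ Finset.range M, ∫ t in ((m : ℝ) / M)..((m + 1 : ℕ) : ℝ) / M, F t =
      ∫ t in (0 : ℝ)..1, F t := by
    rw [intervalIntegral.sum_integral_adjacent_intervals (a := fun k : ℕ => (k : ℝ) / M)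
      (fun k _ => hF.intervalIntegrable _ _)]
    simp [hM0.ne']
  rw [Fin.sum_univ_eq_sum_range (fun m : ℕ => F (m / M)) M, ← hint, Finset.mul_sum, dist_eq_norm,
    ← Finset.sum_sub_distrib]
  have hterm : ∀ m ∈ Finset.range M, ‖1 / (M : ℝ) * F (m / M) -
      ∫ t in ((m : ℝ) / M)..((m + 1 : ℕ) : ℝ) / M, F t‖ ≤ ε / 2 * (1 / M) := by
    intro m hm
    rw [Finset.mem_range] at hm
    have hm' : ((m + 1 : ℕ) : ℝ) ≤ M := by exact_mod_cast hm
    have hlen : ((m + 1 : ℕ) : ℝ) / M - m / M = 1 / M := by push_cast; ring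
    have hle : (m : ℝ) / M ≤ ((m + 1 : ℕ) : ℝ) / M := by
      have : 0 < 1 / (M : ℝ) := by positivity
      linarith
    have hconst : 1 / (M : ℝ) * F (m / M) =
        ∫ t in ((m : ℝ) / M)..((m + 1 : ℕ) : ℝ) / M, F (m / M) := by
      rw [intervalIntegral.integral_const, hlen, smul_eq_mul]
    rw [hconst, ← intervalIntegral.integral_sub (by simp) (hF.intervalIntegrable _ _)]
    have hb := intervalIntegral.norm_integral_le_of_norm_le_const (C := ε / 2)
      (f := fun t => F (m / M) - F t) (a := (m : ℝ) / M) (b := ((m + 1 : ℕ) : ℝ) / M) (by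
        intro t ht
        rw [Set.uIoc_of_le hle] at ht
        have h0 : 0 ≤ (m : ℝ) / M := by positivity
        have h1 : ((m + 1 : ℕ) : ℝ) / M ≤ 1 := (div_le_one hM0).2 hm'
        rw [← dist_eq_norm]
        refine (hδ' _ ⟨h0, hle.trans h1⟩ _ ⟨h0.trans ht.1.le, ht.2.trans h1⟩ ?_).le
        rw [Real.dist_eq, abs_sub_comm, abs_of_pos (sub_pos.2 ht.1)]
        linarith [ht.2])
    rwa [hlen, abs_of_pos (by positivity)] at hb
  calc _ ≤ ∑ m ∈ Finset.range M, ε / 2 * (1 / (M : ℝ)) :=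
        (norm_sum_le _ _).trans (Finset.sum_le_sum hterm)
    _ = ε / 2 := by simp; field_simp
    _ < ε := by linarith

lemma abs_log_sub_log_le {a b : ℝ} (hb : 1 ≤ b) (hab : |a - b| ≤ 1 / 2) :
    |Real.log a - Real.log b| ≤ 2 * |a - b| := by
  have h := abs_le.1 hab
  have ha : 1 / 2 ≤ a := by linarith
  have key : ∀ x y : ℝ, 1 / 2 ≤ x → 1 / 2 ≤ y →
      Real.log x - Real.log y ≤ 2 * |x - y| := by
    intro x y hx hy
    have hx0 : 0 < x := by linarith
    have hy0 : 0 < y := by linarith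
    rw [← Real.log_div hx0.ne' hy0.ne']
    have h1 := Real.log_le_sub_one_of_pos (div_pos hx0 hy0)
    have h2 : x / y - 1 = (x - y) / y := by field_simp
    rw [h2] at h1
    refine h1.trans ((div_le_div_of_nonneg_right (le_abs_self _) hy0.le).trans ?_)
    rw [div_le_iff₀ hy0]
    nlinarith [abs_nonneg (x - y)]
  rw [abs_le]
  constructor
  · have := key b a (by linarith) ha
    rw [abs_sub_comm] at this
    linarith
  · exact key a b ha (by linarith)

lemma summable_lorentzian (C : ℝ) {c : ℝ} (hc : 0 < c) :
    Summable (fun s : ℤ => C / (1 + (c * (s : ℝ)) ^ 2)) := by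
  have h := ((Real.summable_one_div_int_pow (p := 2)).2 (by norm_num)).mul_left (|C| / c ^ 2)
  refine h.of_norm_bounded_eventually ?_
  filter_upwards [(Set.finite_singleton (0 : ℤ)).compl_mem_cofinite] with s hs
  have hs0 : (s : ℝ) ≠ 0 := by exact_mod_cast hs
  have hs2 : 0 < (s : ℝ) ^ 2 := by positivity
  rw [norm_div, Real.norm_eq_abs, Real.norm_of_nonneg (by positivity), div_mul_div_comm, mul_one]
  exact div_le_div_of_nonneg_left (abs_nonneg _) (by positivity) (by rw [mul_pow]; linarith)

/-- The matrix entries, restricted to the symmetric window, converge in `ℓ¹(ℤ)` to the samples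
`g (τ s)`. -/
lemma tendsto_tsum_window {g : ℝ → ℝ} (hg_cont : Continuous g)
    {C : ℝ} (hC : 0 < C) (hg_bound : ∀ u : ℝ, |g u| ≤ C / (1 + u ^ 2))
    {τ : ℝ} (hτ : 0 < τ) :
    Tendsto (fun M : ℕ => ∑' s : ℤ, |(if s ∈ window M then
      g ((τ * M / Real.pi) * Real.sin (Real.pi * (s : ℝ) / M)) else 0) - g (τ * s)|)
      atTop (𝓝 0) := by
  have hπ := Real.pi_pos
  have hsum := (summable_lorentzian C (c := 2 * τ / Real.pi) (by positivity)).add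
    (summable_lorentzian C hτ)
  have := tendsto_tsum_of_dominated_convergence (𝓕 := atTop)
    (f := fun (M : ℕ) (s : ℤ) => |(if s ∈ window M then
      g ((τ * M / Real.pi) * Real.sin (Real.pi * (s : ℝ) / M)) else 0) - g (τ * s)|)
    (g := fun _ => (0 : ℝ)) hsum ?_ ?_
  · simpa using this
  · intro s
    -- For `M ≠ 0` the argument `(τ M / π) sin (π s / M)` equals `τ s · sinc (π s / M)`.
    have hlim : Tendsto (fun M : ℕ => |g (τ * s * Real.sinc (Real.pi * (s : ℝ) / M)) - g (τ * s)|)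
        atTop (𝓝 0) := by
      have h1 : Tendsto (fun M : ℕ => Real.pi * (s : ℝ) / M) atTop (𝓝 0) :=
        tendsto_const_div_atTop_nhds_zero_nat _
      have h2 : Continuous fun x : ℝ => |g (τ * s * Real.sinc x) - g (τ * s)| := by
        have := Real.continuous_sinc
        fun_prop
      simpa [Function.comp_def] using (h2.tendsto 0).comp h1
    refine hlim.congr' ?_
    filter_upwards [eventually_ge_atTop (2 * s.natAbs + 2)] with M hM
    have hmem : s ∈ window M := by simp only [window, Finset.mem_Ico]; omega
    have hM0 : (M : ℝ) ≠ 0 := by exact_mod_cast (by omega : M ≠ 0)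
    rw [if_pos hmem]
    congr 3
    by_cases hs : (s : ℝ) = 0
    · simp [hs]
    · rw [Real.sinc_of_ne_zero (by positivity)]
      field_simp
  · refine Eventually.of_forall fun M s => ?_
    rw [Real.norm_eq_abs, abs_abs]
    refine (abs_sub _ _).trans (add_le_add ?_ (hg_bound _))
    split_ifs with hs
    · simp only [window, Finset.mem_Ico] at hs
      have hM0 : (0 : ℝ) < M := by exact_mod_cast (by omega : 0 < M)
      have hsM : 2 * |(s : ℝ)| ≤ M := by
        have : 2 * |s| ≤ M := by rcases abs_cases s with h | h <;> omega
        exact_mod_cast this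
      refine (hg_bound _).trans ?_
      -- Jordan's inequality applies because `|s| ≤ M / 2` on the window.
      have hsin := Real.mul_abs_le_abs_sin (x := Real.pi * s / M) (by
        rw [abs_div, abs_mul, abs_of_pos hπ, abs_of_pos hM0, div_le_div_iff₀ hM0 two_pos]
        nlinarith)
      have habs : |2 * τ / Real.pi * s| ≤
          |(τ * M / Real.pi) * Real.sin (Real.pi * (s : ℝ) / M)| := by
        rw [abs_mul (τ * M / Real.pi), abs_of_pos (by positivity : 0 < τ * M / Real.pi)]
        refine le_trans (le_of_eq ?_) (mul_le_mul_of_nonneg_left hsin (by positivity))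
        rw [abs_mul, abs_div, abs_mul, abs_div, abs_mul, abs_of_pos hπ, abs_of_pos hM0,
          abs_of_pos hτ, abs_two]
        field_simp
      have := sq_le_sq.2 habs
      gcongr
    · rw [abs_zero]; positivity

lemma norm_windowSymbol_sub_le {g : ℝ → ℝ} {C : ℝ}
    (hg_bound : ∀ u : ℝ, |g u| ≤ C / (1 + u ^ 2)) {τ : ℝ} (hτ : 0 < τ) (M : ℕ) (a : ℤ → ℝ)
    (t : ℝ) :
    ‖windowSymbol M a t - ∑' s : ℤ, (g (τ * s) : ℂ) *
        Complex.exp (2 * Real.pi * Complex.I * (s : ℂ) * (t : ℂ))‖ ≤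
      ∑' s : ℤ, |(if s ∈ window M then a s else 0) - g (τ * s)| := by
  have hexp : ∀ s : ℤ, ‖Complex.exp (2 * Real.pi * Complex.I * (s : ℂ) * (t : ℂ))‖ = 1 := by
    intro s
    rw [show 2 * Real.pi * Complex.I * (s : ℂ) * (t : ℂ) =
      ((2 * Real.pi * s * t : ℝ) : ℂ) * Complex.I by push_cast; ring]
    exact Complex.norm_exp_ofReal_mul_I _
  have hg : Summable fun s : ℤ => |g (τ * s)| :=
    (summable_lorentzian C hτ).of_nonneg_of_le (fun _ => abs_nonneg _) fun s => hg_bound _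
  have hgc : Summable fun s : ℤ => (g (τ * s) : ℂ) *
      Complex.exp (2 * Real.pi * Complex.I * (s : ℂ) * (t : ℂ)) := by
    refine Summable.of_norm ?_
    simpa [hexp, norm_mul] using hg
  have hb0 : ∀ s ∉ window M, (((if s ∈ window M then a s else 0 : ℝ)) : ℂ) *
      Complex.exp (2 * Real.pi * Complex.I * (s : ℂ) * (t : ℂ)) = 0 := by
    intro s hs
    simp [hs]
  have hw : windowSymbol M a t = ∑' s : ℤ, (((if s ∈ window M then a s else 0 : ℝ)) : ℂ) *
      Complex.exp (2 * Real.pi * Complex.I * (s : ℂ) * (t : ℂ)) := by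
    rw [tsum_eq_sum hb0]
    exact Finset.sum_congr rfl fun s hs => by rw [if_pos hs]
  have hbs : Summable fun s : ℤ => (((if s ∈ window M then a s else 0 : ℝ)) : ℂ) *
      Complex.exp (2 * Real.pi * Complex.I * (s : ℂ) * (t : ℂ)) :=
    summable_of_ne_finset_zero hb0
  have hbr : Summable fun s : ℤ => (if s ∈ window M then a s else 0 : ℝ) :=
    summable_of_ne_finset_zero (s := window M) fun s hs => if_neg hs
  rw [hw, ← hbs.tsum_sub hgc]
  refine tsum_of_norm_bounded (hbr.sub (summable_abs_iff.1 hg)).abs.hasSum fun s => ?_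
  rw [← sub_mul, norm_mul, hexp, mul_one, ← Complex.ofReal_sub, Complex.norm_real,
    Real.norm_eq_abs]

/-- lattice thermodynamic limit of the pressure: for `g` even, continuous, bounded
by `C/(1+u²)`, lattice spacing `τ > 0`, symbol `f^∞(t) = Σ_{s∈ℤ} g(τs) e^{2πist} ≥ 0` and
fugacity `z > 0`, with `L^{(M)}` the circulant matrix with entries
`g((τM/π) sin(π(j-l)/M))`, one has
`lim_{M→∞} (1/M) log |det(I + z L^{(M)})| = ∫_{-1/2}^{1/2} log(1 + z f^∞(t)) dt`. -/
theorem lattice_thermodynamic_limit_pressure (g : ℝ → ℝ)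
    (hg_even : ∀ u : ℝ, g (-u) = g u) (hg_cont : Continuous g)
    (C : ℝ) (hC : 0 < C) (hg_bound : ∀ u : ℝ, |g u| ≤ C / (1 + u ^ 2))
    (τ : ℝ) (hτ : 0 < τ)
    (finf : ℝ → ℝ)
    (hfinf : ∀ t : ℝ, (finf t : ℂ) =
      ∑' s : ℤ, (g (τ * s) : ℂ) * Complex.exp (2 * Real.pi * Complex.I * (s : ℂ) * (t : ℂ)))
    (hfinf_pos : ∀ t : ℝ, 0 ≤ finf t)
    (z : ℝ) (hz : 0 < z) :
    Tendsto (fun M : ℕ =>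
        (1 / (M : ℝ)) * Real.log
          |(1 + z • Matrix.of (fun j l : Fin M =>
              g ((τ * M / Real.pi) * Real.sin (Real.pi * ((j : ℝ) - (l : ℝ)) / M)))).det|)
      atTop
      (𝓝 (∫ t in (-(1/2) : ℝ)..(1/2 : ℝ), Real.log (1 + z * finf t))) := by
  have hfc : Continuous finf := by
    have : Continuous fun t : ℝ => ∑' s : ℤ, (g (τ * s) : ℂ) *
        Complex.exp (2 * Real.pi * Complex.I * (s : ℂ) * (t : ℂ)) := by
      refine continuous_tsum (u := fun s : ℤ => C / (1 + (τ * (s : ℝ)) ^ 2)) (fun s => by fun_prop)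
        (summable_lorentzian C hτ) fun s t => ?_
      rw [norm_mul, show 2 * Real.pi * Complex.I * (s : ℂ) * (t : ℂ) =
        ((2 * Real.pi * s * t : ℝ) : ℂ) * Complex.I by push_cast; ring,
        Complex.norm_exp_ofReal_mul_I, mul_one, Complex.norm_real]
      exact hg_bound _
    have h2 := Complex.continuous_re.comp this
    refine h2.congr fun t => ?_
    rw [Function.comp_apply, ← hfinf, Complex.ofReal_re]
  have hfper : Function.Periodic finf 1 := by
    intro t
    apply Complex.ofReal_injective
    rw [hfinf, hfinf]
    refine tsum_congr fun s => ?_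
    congr 1
    rw [Complex.exp_eq_exp_iff_exists_int]
    exact ⟨s, by push_cast; ring⟩
  have hpos : ∀ t, 1 ≤ 1 + z * finf t := fun t => by
    have := mul_nonneg hz.le (hfinf_pos t)
    linarith
  have hFc : Continuous fun t => Real.log (1 + z * finf t) :=
    Continuous.log (by fun_prop) fun t => by linarith [hpos t]
  have hint : ∫ t in (-(1/2) : ℝ)..(1/2 : ℝ), Real.log (1 + z * finf t) =
      ∫ t in (0 : ℝ)..1, Real.log (1 + z * finf t) := by
    have hp : Function.Periodic (fun t => Real.log (1 + z * finf t)) 1 := fun t => by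
      simp only [hfper t]
    have := hp.intervalIntegral_add_eq (-(1/2)) 0
    norm_num at this ⊢
    exact this
  rw [hint]
  have hR := tendsto_riemann_sum hFc
  set a : ℕ → ℤ → ℝ := fun M s => g ((τ * M / Real.pi) * Real.sin (Real.pi * (s : ℝ) / M)) with ha
  set d : ℕ → ℝ := fun M => ∑' s : ℤ, |(if s ∈ window M then a M s else 0) - g (τ * s)| with hd
  have hd0 : Tendsto d atTop (𝓝 0) := tendsto_tsum_window hg_cont hC hg_bound hτ
  have hzd : Tendsto (fun M => 2 * (z * d M)) atTop (𝓝 0) := by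
    simpa using (hd0.const_mul z).const_mul 2
  refine tendsto_of_tendsto_of_dist hR (squeeze_zero' (Eventually.of_forall fun _ => dist_nonneg)
    ?_ hzd)
  filter_upwards [eventually_ge_atTop 1, hzd.eventually_le_const (zero_lt_one)] with M hM hdM
  have hM0 : (0 : ℝ) < M := by exact_mod_cast hM
  have hper : ∀ k, a M (k + M) = a M k := by
    intro k
    simp only [ha]
    -- The shift by `M` flips the sign of the sine, which evenness of `g` absorbs.
    rw [← hg_even]
    congr 1
    push_cast
    rw [show Real.pi * ((k : ℝ) + M) / M = Real.pi * k / M + Real.pi by field_simp,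
      Real.sin_add_pi]
    ring
  have hdet := det_one_add_circulant (by omega) hper z
  have hmat : (Matrix.of fun j l : Fin M => a M ((j : ℕ) - (l : ℕ))) = Matrix.of (fun j l : Fin M =>
      g ((τ * M / Real.pi) * Real.sin (Real.pi * ((j : ℝ) - (l : ℝ)) / M))) := by
    ext j l
    simp [ha]
  rw [hmat] at hdet
  have hnorm := congrArg norm hdet
  rw [Complex.norm_real, Real.norm_eq_abs, norm_prod] at hnorm
  have hclose : ∀ t : ℝ, |‖1 + z * windowSymbol M (a M) t‖ - (1 + z * finf t)| ≤ z * d M := by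
    intro t
    have h1 : 1 + z * finf t = ‖((1 + z * finf t : ℝ) : ℂ)‖ := by
      rw [Complex.norm_real, Real.norm_of_nonneg (by linarith [hpos t])]
    rw [h1]
    refine (abs_norm_sub_norm_le _ _).trans ?_
    rw [show 1 + z * windowSymbol M (a M) t - ((1 + z * finf t : ℝ) : ℂ) =
      z * (windowSymbol M (a M) t - finf t) by push_cast; ring, norm_mul, Complex.norm_real,
      Real.norm_of_nonneg hz.le, hfinf]
    exact mul_le_mul_of_nonneg_left (norm_windowSymbol_sub_le hg_bound hτ M (a M) t) hz.le
  have hne : ∀ m ∈ (Finset.univ : Finset (Fin M)),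
      ‖1 + z * windowSymbol M (a M) ((m : ℕ) / M)‖ ≠ 0 := by
    intro m _ h0
    have := abs_le.1 (hclose ((m : ℕ) / M))
    linarith [hpos ((m : ℕ) / M)]
  rw [hnorm, Real.log_prod hne, dist_eq_norm, ← mul_sub, ← Finset.sum_sub_distrib, norm_mul,
    Real.norm_of_nonneg (by positivity)]
  calc _ ≤ 1 / (M : ℝ) * ∑ m : Fin M, 2 * (z * d M) := by
        refine mul_le_mul_of_nonneg_left ((norm_sum_le _ _).trans
          (Finset.sum_le_sum fun m _ => ?_)) (by positivity)
        rw [norm_sub_rev]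
        have hc := hclose ((m : ℕ) / M)
        exact (abs_log_sub_log_le (hpos _) (hc.trans (by linarith))).trans (by linarith)
    _ = 2 * (z * d M) := by simp; field_simp
end

section
/- (Lattice thermodynamic limit of the correlation kernel) Let g : ℝ → ℝ be even and continuous with |g(u)| ≤ C/(1+u²) for some constant C > 0, let τ > 0, and define f^∞(t) := Σ_{s∈ℤ} g(τs) e^{2πist}. Assume f^∞(t) ≥ 0 for all t, and let z > 0. For each positive integer M let L^{(M)} be the M×M circulant matrix with entries L^{(M)}(j,l) = g( (τM/π) sin(π(j−l)/M) ). Then for all sufficiently large M, I_M + zL^{(M)} is invertible, and for fixed positive integers x, y the (x,y) entry of K^{(M)} := zL^{(M)}(I_M + zL^{(M)})^{-1} satisfies lim_{M→∞} K^{(M)}(x,y) = z ∫_{−1/2}^{1/2} e^{2πi(y−x)t} f^∞(t) / (1 + z f^∞(t)) dt. -/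
/-!
The matrix `L^{(M)}` is circulant (evenness of `g` makes its entry function `M`-periodic), so it
is diagonalised by the characters of `ZMod M`. Circulant matrices are handled through their
symbol: `φ ↦ symbolMatrix M φ` is multiplicative and unital, hence `zL(1 + zL)⁻¹` has symbol
`zλ/(1 + zλ)` as soon as `1 + zλ_k` never vanishes (`kernel_eq_symbolMatrix`).

The eigenvalues `λ_k` are the window sums `Σ_{-M/2 < s ≤ M/2} g((τM/π) sin(πs/M)) e^{2πisk/M}`.
Since `|sin θ| ≥ (2/π)|θ|` for `|θ| ≤ π/2`, the terms are dominated by `C/(1 + (2τs/π)²)`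
uniformly in `M`, and dominated convergence shows that `λ_k - f^∞(k/M)` tends to `0` uniformly
in `k` (`tendsto_symbolError`, `norm_latticeSymbol_sub_le`). As `f^∞ ≥ 0`, this keeps `1 + zλ_k`
away from `0` for large `M` and makes the kernel entry asymptotic to a Riemann sum of the
continuous `1`-periodic function `e^{2πi(y-x)t} z f^∞(t)/(1 + z f^∞(t))`.
-/

open MeasureTheory Filter Topology

/-- The integer-lag entry function `s ↦ g((τM/π) sin(πs/M))` of the circulant matrix of size `M`. -/
noncomputable def chordEntry (g : ℝ → ℝ) (τ : ℝ) (M : ℕ) (s : ℤ) : ℝ :=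
  g ((τ * M / Real.pi) * Real.sin (Real.pi * (s : ℝ) / M))

/-- `chordEntry` cut off to the window `-M/2 < s ≤ M/2`, which contains exactly one
representative of each residue class modulo `M`, namely `ZMod.valMinAbs`. -/
noncomputable def windowEntry (g : ℝ → ℝ) (τ : ℝ) (M : ℕ) (s : ℤ) : ℝ :=
  open Classical in if s * 2 ∈ Set.Ioc (-(M : ℤ)) M then chordEntry g τ M s else 0

/-- The circulant matrix with symbol `φ` on the dual group `ZMod M`, i.e. with eigenvalues
`φ k`. -/
noncomputable def symbolMatrix (M : ℕ) [NeZero M] (φ : ZMod M → ℂ) : Matrix (Fin M) (Fin M) ℂ :=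
  fun j l => (M : ℂ)⁻¹ * ∑ k : ZMod M,
    ZMod.stdAddChar (k * (((l : ℕ) : ZMod M) - ((j : ℕ) : ZMod M))) * φ k

/-- The eigenvalues of the circulant matrix with entries `chordEntry`. -/
noncomputable def latticeSymbol (g : ℝ → ℝ) (τ : ℝ) (M : ℕ) [NeZero M] (k : ZMod M) : ℂ :=
  ∑ m : ZMod M, (chordEntry g τ M m.valMinAbs : ℂ) * ZMod.stdAddChar (m * k)

/-- The `ℓ¹` distance between the windowed entries and the samples `g(τs)`; it bounds the
distance between the finite and limiting symbols. -/
noncomputable def symbolError (g : ℝ → ℝ) (τ : ℝ) (M : ℕ) : ℝ :=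
  ∑' s : ℤ, |windowEntry g τ M s - g (τ * s)|

/-! ### Circulant matrices as functions of their symbol -/

lemma sum_fin_eq_sum_zmod {M : ℕ} [NeZero M] (F : ZMod M → ℂ) :
    ∑ i : Fin M, F ((i : ℕ) : ZMod M) = ∑ a : ZMod M, F a := by
  refine Fintype.sum_bijective (fun i : Fin M => ((i : ℕ) : ZMod M)) ⟨?_, ?_⟩ _ _ (fun _ => rfl)
  · intro i j h
    have h' := congrArg ZMod.val h
    simp only [ZMod.val_natCast, Nat.mod_eq_of_lt i.2, Nat.mod_eq_of_lt j.2] at h'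
    exact Fin.ext h'
  · intro a
    exact ⟨⟨a.val, ZMod.val_lt a⟩, by simp⟩

lemma sum_stdAddChar_mul {M : ℕ} [NeZero M] (b : ZMod M) :
    ∑ a : ZMod M, (ZMod.stdAddChar (a * b) : ℂ) = if b = 0 then (M : ℂ) else 0 := by
  rw [AddChar.sum_mulShift b (ZMod.isPrimitive_stdAddChar M), ZMod.card]
  split_ifs <;> simp

lemma symbolMatrix_mul {M : ℕ} [NeZero M] (φ ψ : ZMod M → ℂ) :
    symbolMatrix M φ * symbolMatrix M ψ = symbolMatrix M (fun k => φ k * ψ k) := by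
  have hM : (M : ℂ) ≠ 0 := by exact_mod_cast NeZero.ne M
  ext j l
  simp only [Matrix.mul_apply, symbolMatrix]
  set a : ZMod M := ((j : ℕ) : ZMod M)
  set b : ZMod M := ((l : ℕ) : ZMod M)
  rw [sum_fin_eq_sum_zmod (fun i => ((M : ℂ)⁻¹ * ∑ k : ZMod M,
    ZMod.stdAddChar (k * (i - a)) * φ k) * ((M : ℂ)⁻¹ * ∑ k : ZMod M,
    ZMod.stdAddChar (k * (b - i)) * ψ k))]
  have h1 : ∀ i : ZMod M, ((M : ℂ)⁻¹ * ∑ k : ZMod M,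
      ZMod.stdAddChar (k * (i - a)) * φ k) * ((M : ℂ)⁻¹ * ∑ k : ZMod M,
      ZMod.stdAddChar (k * (b - i)) * ψ k) = ∑ k : ZMod M, ∑ k' : ZMod M,
      ((M : ℂ)⁻¹ * (M : ℂ)⁻¹ * φ k * ψ k' * ZMod.stdAddChar (k' * b - k * a)) *
        ZMod.stdAddChar (i * (k - k')) := by
    intro i
    rw [mul_mul_mul_comm, Finset.sum_mul_sum, Finset.mul_sum]
    refine Finset.sum_congr rfl fun k _ => ?_
    rw [Finset.mul_sum]
    refine Finset.sum_congr rfl fun k' _ => ?_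
    have : (ZMod.stdAddChar (k * (i - a)) : ℂ) * ZMod.stdAddChar (k' * (b - i))
        = ZMod.stdAddChar (k' * b - k * a) * ZMod.stdAddChar (i * (k - k')) := by
      rw [← AddChar.map_add_eq_mul, ← AddChar.map_add_eq_mul]
      congr 1; ring
    linear_combination ((M : ℂ)⁻¹ * (M : ℂ)⁻¹ * φ k * ψ k') * this
  simp_rw [h1]
  rw [Finset.sum_comm, Finset.mul_sum]
  refine Finset.sum_congr rfl fun k _ => ?_
  rw [Finset.sum_comm]
  simp_rw [← Finset.mul_sum, sum_stdAddChar_mul, sub_eq_zero]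
  simp only [mul_ite, mul_zero, Finset.sum_ite_eq, Finset.mem_univ, if_true, mul_sub]
  field_simp

lemma symbolMatrix_one {M : ℕ} [NeZero M] : symbolMatrix M (fun _ => 1) = 1 := by
  have hM : (M : ℂ) ≠ 0 := by exact_mod_cast NeZero.ne M
  ext j l
  simp only [symbolMatrix, mul_one, sum_stdAddChar_mul, Matrix.one_apply, sub_eq_zero]
  have : (((l : ℕ) : ZMod M) = ((j : ℕ) : ZMod M)) ↔ j = l := by
    constructor
    · intro h
      have h' := congrArg ZMod.val h
      simp only [ZMod.val_natCast, Nat.mod_eq_of_lt l.2, Nat.mod_eq_of_lt j.2] at h'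
      exact Fin.ext h'.symm
    · rintro rfl; rfl
  simp only [this]
  split_ifs <;> simp [hM]

lemma one_add_smul_symbolMatrix {M : ℕ} [NeZero M] (z : ℂ) (φ : ZMod M → ℂ) :
    1 + z • symbolMatrix M φ = symbolMatrix M (fun k => 1 + z * φ k) := by
  rw [← symbolMatrix_one]
  ext j l
  simp only [Matrix.add_apply, Matrix.smul_apply, symbolMatrix, smul_eq_mul, Finset.mul_sum,
    ← Finset.sum_add_distrib]
  exact Finset.sum_congr rfl fun k _ => by ring

/-- Evenness of `g` absorbs the sign `sin(θ + nπ) = ±sin θ`. -/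
lemma chordEntry_congr {g : ℝ → ℝ} (hg : ∀ u, g (-u) = g u) (τ : ℝ) {M : ℕ} [NeZero M]
    {s t : ℤ} (h : (s : ZMod M) = (t : ZMod M)) : chordEntry g τ M s = chordEntry g τ M t := by
  have hM : (M : ℝ) ≠ 0 := by exact_mod_cast NeZero.ne M
  obtain ⟨n, hn⟩ := ((ZMod.intCast_eq_intCast_iff_dvd_sub _ _ _).1 h)
  have ht : t = s + M * n := by linarith
  subst ht
  unfold chordEntry
  have : Real.pi * ((s + M * n : ℤ) : ℝ) / M = Real.pi * s / M + n * Real.pi := by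
    push_cast; field_simp
  rw [this, Real.sin_add_int_mul_pi]
  rcases Int.even_or_odd n with hn | hn
  · rw [hn.neg_one_zpow, one_mul]
  · rw [hn.neg_one_zpow, neg_one_mul, mul_neg, hg]

/-- Fourier inversion on `ZMod M`: the circulant matrix with entries `chordEntry` has
symbol `latticeSymbol`. -/
lemma symbolMatrix_latticeSymbol {g : ℝ → ℝ} (hg : ∀ u, g (-u) = g u) (τ : ℝ) {M : ℕ} [NeZero M]
    (j l : Fin M) :
    symbolMatrix M (latticeSymbol g τ M) j l = (chordEntry g τ M ((j : ℤ) - (l : ℤ)) : ℂ) := by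
  have hM : (M : ℂ) ≠ 0 := by exact_mod_cast NeZero.ne M
  simp only [symbolMatrix, latticeSymbol]
  set a : ZMod M := ((j : ℕ) : ZMod M) with ha
  set b : ZMod M := ((l : ℕ) : ZMod M) with hb
  have h1 : ∀ k : ZMod M, (ZMod.stdAddChar (k * (b - a)) : ℂ) *
      ∑ m : ZMod M, (chordEntry g τ M m.valMinAbs : ℂ) * ZMod.stdAddChar (m * k)
      = ∑ m : ZMod M, (chordEntry g τ M m.valMinAbs : ℂ) *
        ZMod.stdAddChar (k * (m - (a - b))) := by
    intro k
    rw [Finset.mul_sum]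
    refine Finset.sum_congr rfl fun m _ => ?_
    rw [mul_left_comm, ← AddChar.map_add_eq_mul]
    congr 2; ring
  simp_rw [h1]
  rw [Finset.sum_comm]
  simp_rw [← Finset.mul_sum, sum_stdAddChar_mul, sub_eq_zero]
  simp only [mul_ite, mul_zero, Finset.sum_ite_eq', Finset.mem_univ, if_true]
  rw [chordEntry_congr hg τ (M := M) (s := (a - b).valMinAbs) (t := (j : ℤ) - (l : ℤ))
    (by rw [ZMod.coe_valMinAbs]; push_cast; rfl)]
  field_simp

/-! ### Uniform convergence of the symbols -/

lemma summable_inv_quadratic (C : ℝ) {a : ℝ} (ha : 0 < a) :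
    Summable fun s : ℤ => C / (1 + (a * s) ^ 2) := by
  have h : Summable fun s : ℤ => (|C| / a ^ 2) * (1 / (s : ℝ) ^ 2) :=
    (Real.summable_one_div_int_pow.2 one_lt_two).mul_left _
  refine h.of_norm_bounded_eventually ?_
  have : ∀ᶠ s : ℤ in cofinite, s ≠ 0 :=
    (Set.finite_singleton (0 : ℤ)).compl_mem_cofinite
  filter_upwards [this] with s hs
  have hs' : (s : ℝ) ≠ 0 := by exact_mod_cast hs
  rw [norm_div, Real.norm_eq_abs, Real.norm_of_nonneg (by positivity : 0 ≤ 1 + (a * (s : ℝ)) ^ 2),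
    div_mul_div_comm, mul_one, ← mul_pow]
  gcongr
  linarith

lemma abs_windowEntry_le {g : ℝ → ℝ} {C : ℝ} (hC : 0 < C)
    (hg : ∀ u : ℝ, |g u| ≤ C / (1 + u ^ 2)) {τ : ℝ} (hτ : 0 < τ) (M : ℕ) (s : ℤ) :
    |windowEntry g τ M s| ≤ C / (1 + (2 * τ / Real.pi * s) ^ 2) := by
  unfold windowEntry
  split_ifs with h
  · have hM : (0 : ℝ) < M := by
      have := h.1.trans_le h.2
      have : (0 : ℤ) < M := by omega
      exact_mod_cast this
    refine (hg _).trans ?_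
    have hpi := Real.pi_pos
    have hs : |(s : ℝ)| * 2 ≤ M := by
      have h2 : |s| * 2 ≤ M := by
        have := h.1; have := h.2
        rcases abs_cases s with ⟨h, _⟩ | ⟨h, _⟩ <;> rw [h] <;> omega
      exact_mod_cast h2
    have hx : |Real.pi * (s : ℝ) / M| = Real.pi * |(s : ℝ)| / M := by
      rw [abs_div, abs_mul, abs_of_pos hpi, abs_of_pos hM]
    have hsin := Real.mul_abs_le_abs_sin (x := Real.pi * (s : ℝ) / M) (by
      rw [hx, div_le_div_iff₀ hM two_pos]
      nlinarith)
    rw [hx] at hsin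
    have hsq : (2 * τ / Real.pi * (s : ℝ)) ^ 2 ≤
        (τ * M / Real.pi * Real.sin (Real.pi * (s : ℝ) / M)) ^ 2 := by
      rw [sq_le_sq, abs_mul, abs_mul, abs_of_pos (by positivity : 0 < 2 * τ / Real.pi),
        abs_of_pos (by positivity : 0 < τ * M / Real.pi)]
      calc 2 * τ / Real.pi * |(s : ℝ)|
          = τ * M / Real.pi * (2 / Real.pi * (Real.pi * |(s : ℝ)| / M)) := by field_simp
        _ ≤ _ := by gcongr
    gcongr
  · rw [abs_zero]; positivity

lemma tendsto_windowEntry {g : ℝ → ℝ} (hg : Continuous g) (τ : ℝ) (s : ℤ) :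
    Tendsto (fun M : ℕ => windowEntry g τ M s) atTop (𝓝 (g (τ * s))) := by
  have h0 : Tendsto (fun M : ℕ => Real.pi * (s : ℝ) / M) atTop (𝓝 0) :=
    tendsto_const_div_atTop_nhds_zero_nat _
  have h1 : Tendsto (fun M : ℕ => g (τ * s * Real.sinc (Real.pi * (s : ℝ) / M))) atTop
      (𝓝 (g (τ * s))) := by
    have := (hg.tendsto _).comp (((Real.continuous_sinc.tendsto 0).comp h0).const_mul (τ * s))
    simpa [Function.comp_def] using this
  refine h1.congr' ?_
  filter_upwards [eventually_gt_atTop (2 * s.natAbs)] with M hM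
  have hM0 : (M : ℝ) ≠ 0 := by
    have : M ≠ 0 := by omega
    exact_mod_cast this
  unfold windowEntry chordEntry
  rw [if_pos (by constructor <;> omega)]
  congr 1
  by_cases hs : s = 0
  · simp [hs]
  · have hs' : (s : ℝ) ≠ 0 := by exact_mod_cast hs
    rw [Real.sinc_of_ne_zero (by have := Real.pi_ne_zero; positivity)]
    field_simp

lemma tendsto_symbolError {g : ℝ → ℝ} (hgc : Continuous g) {C : ℝ} (hC : 0 < C)
    (hg : ∀ u : ℝ, |g u| ≤ C / (1 + u ^ 2)) {τ : ℝ} (hτ : 0 < τ) :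
    Tendsto (symbolError g τ) atTop (𝓝 0) := by
  have hpi := Real.pi_pos
  have := tendsto_tsum_of_dominated_convergence (𝓕 := atTop)
    (f := fun (M : ℕ) (s : ℤ) => |windowEntry g τ M s - g (τ * s)|) (g := fun _ => (0 : ℝ))
    ((summable_inv_quadratic C (by positivity : 0 < 2 * τ / Real.pi)).add
      (summable_inv_quadratic C hτ))
    (fun s => by
      have h := ((tendsto_windowEntry hgc τ s).sub_const (g (τ * s))).abs
      simpa using h)
    (Eventually.of_forall fun M s => by
      rw [Real.norm_eq_abs, abs_abs]
      exact (abs_sub _ _).trans (add_le_add (abs_windowEntry_le hC hg hτ M s) (hg _)))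
  rw [tsum_zero] at this
  exact this

lemma norm_exp_two_pi_mul (r t : ℝ) :
    ‖Complex.exp (2 * Real.pi * Complex.I * (r : ℂ) * (t : ℂ))‖ = 1 := by
  rw [show (2 * Real.pi * Complex.I * (r : ℂ) * (t : ℂ) : ℂ)
    = ((2 * Real.pi * r * t : ℝ) : ℂ) * Complex.I by push_cast; ring]
  exact Complex.norm_exp_ofReal_mul_I _

lemma stdAddChar_intCast_mul {M : ℕ} [NeZero M] (s : ℤ) (k : ZMod M) :
    (ZMod.stdAddChar ((s : ZMod M) * k) : ℂ) =
      Complex.exp (2 * Real.pi * Complex.I * (s : ℂ) * (((k.val : ℝ) / M : ℝ) : ℂ)) := by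
  have : (s : ZMod M) * k = ((s * (k.val : ℤ) : ℤ) : ZMod M) := by
    push_cast; rw [ZMod.natCast_zmod_val]
  rw [this, ZMod.stdAddChar_coe]
  push_cast
  congr 1; ring

lemma latticeSymbol_eq_tsum (g : ℝ → ℝ) (τ : ℝ) {M : ℕ} [NeZero M] (k : ZMod M) :
    latticeSymbol g τ M k = ∑' s : ℤ, (windowEntry g τ M s : ℂ) *
      Complex.exp (2 * Real.pi * Complex.I * (s : ℂ) * (((k.val : ℝ) / M : ℝ) : ℂ)) := by
  rw [← (ZMod.injective_valMinAbs (n := M)).tsum_eq, tsum_fintype]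
  · refine Finset.sum_congr rfl fun m _ => ?_
    rw [← stdAddChar_intCast_mul, ZMod.coe_valMinAbs, windowEntry, if_pos m.valMinAbs_mem_Ioc]
  · intro s hs
    refine ⟨(s : ZMod M), (ZMod.valMinAbs_spec _ _).2 ⟨rfl, ?_⟩⟩
    by_contra h
    exact hs (by simp only [windowEntry, if_neg h]; simp)

lemma norm_latticeSymbol_sub_le {g : ℝ → ℝ} {C : ℝ} (hC : 0 < C)
    (hg : ∀ u : ℝ, |g u| ≤ C / (1 + u ^ 2)) {τ : ℝ} (hτ : 0 < τ) {finf : ℝ → ℝ}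
    (hfinf : ∀ t : ℝ, (finf t : ℂ) =
      ∑' s : ℤ, (g (τ * s) : ℂ) * Complex.exp (2 * Real.pi * Complex.I * (s : ℂ) * (t : ℂ)))
    {M : ℕ} [NeZero M] (k : ZMod M) :
    ‖latticeSymbol g τ M k - (finf ((k.val : ℝ) / M) : ℂ)‖ ≤ symbolError g τ M := by
  have hpi := Real.pi_pos
  have hn : ∀ s : ℤ, ‖Complex.exp (2 * Real.pi * Complex.I * (s : ℂ) *
      (((k.val : ℝ) / M : ℝ) : ℂ))‖ = 1 := fun s => by
    exact_mod_cast norm_exp_two_pi_mul (s : ℝ) ((k.val : ℝ) / M)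
  have hS1 := summable_inv_quadratic C (by positivity : 0 < 2 * τ / Real.pi)
  have hS2 := summable_inv_quadratic C hτ
  have h1 : Summable fun s : ℤ => (windowEntry g τ M s : ℂ) *
      Complex.exp (2 * Real.pi * Complex.I * (s : ℂ) * (((k.val : ℝ) / M : ℝ) : ℂ)) :=
    hS1.of_norm_bounded fun s => by
      rw [norm_mul, hn, mul_one, Complex.norm_real]
      exact abs_windowEntry_le hC hg hτ M s
  have h2 : Summable fun s : ℤ => (g (τ * s) : ℂ) *
      Complex.exp (2 * Real.pi * Complex.I * (s : ℂ) * (((k.val : ℝ) / M : ℝ) : ℂ)) :=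
    hS2.of_norm_bounded fun s => by
      rw [norm_mul, hn, mul_one, Complex.norm_real]
      exact hg _
  rw [latticeSymbol_eq_tsum, hfinf, ← h1.tsum_sub h2]
  have h3 : Summable fun s : ℤ => |windowEntry g τ M s - g (τ * s)| :=
    (hS1.add hS2).of_nonneg_of_le (fun _ => abs_nonneg _) fun s =>
      (abs_sub _ _).trans (add_le_add (abs_windowEntry_le hC hg hτ M s) (hg _))
  refine tsum_of_norm_bounded h3.hasSum fun s => ?_
  rw [← sub_mul, norm_mul, hn, mul_one, ← Complex.ofReal_sub, Complex.norm_real, Real.norm_eq_abs]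

lemma continuous_limitSymbol {g : ℝ → ℝ} {C : ℝ}
    (hg : ∀ u : ℝ, |g u| ≤ C / (1 + u ^ 2)) {τ : ℝ} (hτ : 0 < τ) {finf : ℝ → ℝ}
    (hfinf : ∀ t : ℝ, (finf t : ℂ) =
      ∑' s : ℤ, (g (τ * s) : ℂ) * Complex.exp (2 * Real.pi * Complex.I * (s : ℂ) * (t : ℂ))) :
    Continuous fun t => (finf t : ℂ) := by
  simp_rw [hfinf]
  refine continuous_tsum (fun s => by fun_prop) (summable_inv_quadratic C hτ) fun s t => ?_
  have := norm_exp_two_pi_mul (s : ℝ) t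
  rw [Complex.ofReal_intCast] at this
  rw [norm_mul, this, mul_one, Complex.norm_real]
  exact hg _

lemma exp_two_pi_int_periodic (n : ℤ) :
    ∀ t : ℝ, Complex.exp (2 * Real.pi * Complex.I * (n : ℂ) * ((t + 1 : ℝ) : ℂ)) =
      Complex.exp (2 * Real.pi * Complex.I * (n : ℂ) * (t : ℂ)) := by
  intro t
  rw [Complex.exp_eq_exp_iff_exists_int]
  exact ⟨n, by push_cast; ring⟩

/-! ### Riemann sums -/

lemma tendsto_riemannSum {F : ℝ → ℂ} (hF : Continuous F) :
    Tendsto (fun M : ℕ => (M : ℂ)⁻¹ * ∑ k ∈ Finset.range M, F ((k : ℝ) / M)) atTop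
      (𝓝 (∫ t in (0 : ℝ)..1, F t)) := by
  have huc := isCompact_Icc.uniformContinuousOn_of_continuous (hF.continuousOn (s := Set.Icc 0 1))
  rw [Metric.uniformContinuousOn_iff_le] at huc
  rw [Metric.tendsto_atTop']
  intro ε hε
  obtain ⟨δ, hδ, hδF⟩ := huc (ε / 2) (half_pos hε)
  obtain ⟨N, hN⟩ := exists_nat_gt (1 / δ)
  refine ⟨N, fun M hM => ?_⟩
  have hNM : (N : ℝ) < M := by exact_mod_cast hM
  have hM0 : (0 : ℝ) < M := (Nat.cast_nonneg N).trans_lt hNM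
  have hMδ : 1 / (M : ℝ) ≤ δ := by
    rw [div_le_iff₀ hM0]
    rw [div_lt_iff₀ hδ] at hN
    nlinarith
  have hsum := intervalIntegral.sum_integral_adjacent_intervals (f := F) (μ := volume)
    (a := fun k : ℕ => (k : ℝ) / M) (n := M) (fun k _ => hF.intervalIntegrable _ _)
  simp only [Nat.cast_zero, zero_div, div_self hM0.ne'] at hsum
  have hlen : ∀ k : ℕ, ((k + 1 : ℕ) : ℝ) / M - (k : ℝ) / M = 1 / M := fun k => by
    push_cast; ring
  rw [dist_eq_norm, ← hsum, Finset.mul_sum, ← Finset.sum_sub_distrib]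
  have hterm : ∀ k ∈ Finset.range M, ‖(M : ℂ)⁻¹ * F ((k : ℝ) / M)
      - ∫ t in ((k : ℝ) / M)..(((k + 1 : ℕ) : ℝ) / M), F t‖ ≤ ε / 2 * (1 / M) := by
    intro k hk
    have hk1 : ((k + 1 : ℕ) : ℝ) ≤ M := by exact_mod_cast Finset.mem_range.1 hk
    have hconst : (M : ℂ)⁻¹ * F ((k : ℝ) / M)
        = ∫ t in ((k : ℝ) / M)..(((k + 1 : ℕ) : ℝ) / M), F ((k : ℝ) / M) := by
      rw [intervalIntegral.integral_const, hlen, Complex.real_smul]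
      push_cast; ring
    rw [hconst, ← intervalIntegral.integral_sub (by simp) (hF.intervalIntegrable _ _)]
    refine (intervalIntegral.norm_integral_le_of_norm_le_const (C := ε / 2) ?_).trans_eq ?_
    · intro t ht
      have hle : (k : ℝ) / M ≤ ((k + 1 : ℕ) : ℝ) / M := by
        have := hlen k
        have : 0 < 1 / (M : ℝ) := by positivity
        linarith
      rw [Set.uIoc_of_le hle] at ht
      have h1 : ((k + 1 : ℕ) : ℝ) / M ≤ 1 := (div_le_one hM0).2 hk1
      have h0 : 0 ≤ (k : ℝ) / M := by positivity
      rw [← dist_eq_norm]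
      refine hδF _ ⟨h0, hle.trans h1⟩ _ ⟨h0.trans ht.1.le, ht.2.trans h1⟩ ?_
      rw [Real.dist_eq, abs_sub_comm, abs_of_pos (sub_pos.2 ht.1)]
      have := hlen k
      linarith [ht.2]
    · rw [hlen, abs_of_pos (by positivity)]
  refine ((norm_sum_le _ _).trans (Finset.sum_le_sum hterm)).trans_lt ?_
  rw [Finset.sum_const, Finset.card_range, nsmul_eq_mul]
  field_simp
  linarith

lemma sum_zmod_val {M : ℕ} [NeZero M] (F : ℕ → ℂ) :
    ∑ k : ZMod M, F k.val = ∑ k ∈ Finset.range M, F k := by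
  rw [← sum_fin_eq_sum_zmod (fun k => F k.val), ← Fin.sum_univ_eq_sum_range]
  refine Finset.sum_congr rfl fun i _ => ?_
  rw [ZMod.val_natCast, Nat.mod_eq_of_lt i.2]

/-! ### The correlation kernel -/

/-- The map `w ↦ zw/(1+zw)` is Lipschitz near the half-line `[0, ∞)`. -/
lemma norm_resolvent_sub_le {z f e : ℝ} (hz : 0 < z) (hf : 0 ≤ f) {w : ℂ}
    (hw : ‖w - f‖ ≤ e) (he : z * e ≤ 1 / 2) :
    1 + z * w ≠ 0 ∧ ‖z * w / (1 + z * w) - z * f / (1 + z * f)‖ ≤ 2 * z * e := by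
  have hzf : 0 ≤ z * f := by positivity
  have hnf : ‖(1 + z * f : ℂ)‖ = 1 + z * f := by
    rw [show (1 + z * f : ℂ) = ((1 + z * f : ℝ) : ℂ) by push_cast; ring, Complex.norm_real,
      Real.norm_of_nonneg (by positivity)]
  have hd : ‖(z : ℂ) * (w - f)‖ ≤ z * e := by
    rw [norm_mul, Complex.norm_real, Real.norm_of_nonneg hz.le]; gcongr
  have hnw : 1 / 2 ≤ ‖1 + z * w‖ := by
    have h := norm_sub_norm_le (1 + z * f : ℂ) (1 + z * w)
    rw [hnf, show (1 + z * f - (1 + z * w) : ℂ) = -(z * (w - f)) by ring, norm_neg] at h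
    linarith
  have hw0 : 1 + z * w ≠ 0 := by
    intro h; rw [h, norm_zero] at hnw; linarith
  have hf0 : (1 + z * f : ℂ) ≠ 0 := by
    intro h; rw [h, norm_zero] at hnf; linarith
  refine ⟨hw0, ?_⟩
  have : (z * w / (1 + z * w) - z * f / (1 + z * f) : ℂ)
      = z * (w - f) / ((1 + z * w) * (1 + z * f)) := by
    field_simp; ring
  rw [this, norm_div, norm_mul (1 + z * w), hnf]
  have he0 : 0 ≤ z * e := (norm_nonneg _).trans hd
  rw [div_le_iff₀ (by positivity)]
  have : 1 / 2 ≤ ‖1 + z * w‖ * (1 + z * f) := by nlinarith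
  nlinarith

/-- Functional calculus: if no eigenvalue of `1 + zA` vanishes, the kernel `zA(1 + zA)⁻¹`
of the circulant matrix `A` with symbol `φ` has symbol `zφ/(1 + zφ)`. -/
lemma kernel_eq_symbolMatrix {M : ℕ} [NeZero M] {A : Matrix (Fin M) (Fin M) ℝ} {φ : ZMod M → ℂ}
    (hA : A.map Complex.ofRealHom = symbolMatrix M φ) {z : ℝ} (hφ : ∀ k, 1 + z * φ k ≠ 0) :
    IsUnit (1 + z • A) ∧ ((z • A) * (1 + z • A)⁻¹).map Complex.ofRealHom
      = symbolMatrix M (fun k => z * φ k / (1 + z * φ k)) := by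
  have hzA : (z • A).map Complex.ofRealHom = (z : ℂ) • symbolMatrix M φ := by
    rw [← hA]; ext i j; simp
  have hB : (1 + z • A).map Complex.ofRealHom = symbolMatrix M (fun k => 1 + z * φ k) := by
    rw [← one_add_smul_symbolMatrix, ← hzA]
    ext i j
    simp [Matrix.one_apply, apply_ite]
  have hinv : symbolMatrix M (fun k => 1 + z * φ k) * symbolMatrix M (fun k => (1 + z * φ k)⁻¹)
      = 1 := by
    rw [symbolMatrix_mul, ← symbolMatrix_one]
    congr 1; funext k; exact mul_inv_cancel₀ (hφ k)
  have hunit : IsUnit (1 + z • A) := by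
    rw [Matrix.isUnit_iff_isUnit_det, isUnit_iff_ne_zero]
    intro h0
    have h1 := RingHom.map_det Complex.ofRealHom (1 + z • A)
    rw [h0, map_zero, RingHom.mapMatrix_apply, hB] at h1
    have h2 := congrArg Matrix.det hinv
    rw [Matrix.det_mul, ← h1, zero_mul, Matrix.det_one] at h2
    exact zero_ne_one h2
  refine ⟨hunit, ?_⟩
  have hK : ((z • A) * (1 + z • A)⁻¹) * (1 + z • A) = z • A :=
    Matrix.nonsing_inv_mul_cancel_right _ _ ((Matrix.isUnit_iff_isUnit_det _).1 hunit)
  have hK' := congrArg (fun B : Matrix (Fin M) (Fin M) ℝ => B.map Complex.ofRealHom) hK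
  rw [Matrix.map_mul, hB, hzA] at hK'
  have hzs : (z : ℂ) • symbolMatrix M φ = symbolMatrix M (fun k => z * φ k) := by
    ext j l
    simp only [Matrix.smul_apply, symbolMatrix, smul_eq_mul, Finset.mul_sum]
    exact Finset.sum_congr rfl fun k _ => by ring
  have := congrArg (· * symbolMatrix M (fun k => (1 + z * φ k)⁻¹)) hK'
  rw [Matrix.mul_assoc, hinv, Matrix.mul_one, hzs, symbolMatrix_mul] at this
  simpa only [div_eq_mul_inv] using this

/-- lattice thermodynamic limit of the correlation kernel: in the setting of the
lattice circulant `L`-ensemble with entries `L^{(M)}(j,l) = g((τM/π) sin(π(j-l)/M))`, symbol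
`f^∞(t) = Σ_{s∈ℤ} g(τs) e^{2πist} ≥ 0` and fugacity `z > 0`, the matrix `I + zL^{(M)}` is
invertible for all sufficiently large `M`, and for fixed positive integers `x, y` the `(x,y)`
entry of `K^{(M)} = zL^{(M)}(I + zL^{(M)})⁻¹` satisfies
`lim_{M→∞} K^{(M)}(x,y) = z ∫_{-1/2}^{1/2} e^{2πi(y-x)t} f^∞(t)/(1 + z f^∞(t)) dt`. -/
theorem lattice_thermodynamic_limit_kernel (g : ℝ → ℝ)
    (hg_even : ∀ u : ℝ, g (-u) = g u) (hg_cont : Continuous g)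
    (C : ℝ) (hC : 0 < C) (hg_bound : ∀ u : ℝ, |g u| ≤ C / (1 + u ^ 2))
    (τ : ℝ) (hτ : 0 < τ)
    (finf : ℝ → ℝ)
    (hfinf : ∀ t : ℝ, (finf t : ℂ) =
      ∑' s : ℤ, (g (τ * s) : ℂ) * Complex.exp (2 * Real.pi * Complex.I * (s : ℂ) * (t : ℂ)))
    (hfinf_pos : ∀ t : ℝ, 0 ≤ finf t)
    (z : ℝ) (hz : 0 < z)
    (Lmat : (M : ℕ) → Matrix (Fin M) (Fin M) ℝ)
    (hLmat : ∀ (M : ℕ) (j l : Fin M),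
      Lmat M j l = g ((τ * M / Real.pi) * Real.sin (Real.pi * ((j : ℝ) - (l : ℝ)) / M)))
    (x y : ℕ) (hx : 0 < x) (hy : 0 < y) :
    (∀ᶠ M : ℕ in atTop, IsUnit (1 + z • Lmat M)) ∧
      Tendsto (fun M : ℕ =>
          if h : x ≤ M ∧ y ≤ M then
            ((((z • Lmat M) * (1 + z • Lmat M)⁻¹) ⟨x - 1, by omega⟩ ⟨y - 1, by omega⟩ : ℝ) : ℂ)
          else 0)
        atTop
        (𝓝 ((z : ℂ) * ∫ t in (-(1/2) : ℝ)..(1/2 : ℝ),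
            Complex.exp (2 * Real.pi * Complex.I * ((y : ℂ) - (x : ℂ)) * (t : ℂ)) * (finf t : ℂ)
              / (1 + (z : ℂ) * (finf t : ℂ)))) := by
  -- For large `M` the symbol error is small enough to keep `1 + zλ_k` away from zero.
  have herr := tendsto_symbolError hg_cont hC hg_bound hτ
  have hsmall : ∀ᶠ M : ℕ in atTop, z * symbolError g τ M ≤ 1 / 2 := by
    have h := herr.const_mul z
    rw [mul_zero] at h
    exact h.eventually_le_const (by norm_num)
  have hmap : ∀ (M : ℕ) [NeZero M],
      (Lmat M).map Complex.ofRealHom = symbolMatrix M (latticeSymbol g τ M) := by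
    intro M _
    ext j l
    rw [symbolMatrix_latticeSymbol hg_even, Matrix.map_apply, hLmat]
    simp [chordEntry]
  have hres : ∀ (M : ℕ) [NeZero M], z * symbolError g τ M ≤ 1 / 2 → ∀ k : ZMod M, _ :=
    fun M _ hM k => norm_resolvent_sub_le hz (hfinf_pos _)
      (norm_latticeSymbol_sub_le hC hg_bound hτ hfinf k) hM
  refine ⟨?_, ?_⟩
  · filter_upwards [hsmall, eventually_gt_atTop 0] with M hM hM0
    have : NeZero M := ⟨hM0.ne'⟩
    exact (kernel_eq_symbolMatrix (hmap M) fun k => (hres M hM k).1).1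
  set E : ℝ → ℂ := fun t => Complex.exp (2 * Real.pi * Complex.I * ((y : ℂ) - (x : ℂ)) * (t : ℂ))
    with hE
  have hEint : ∀ t, E t = Complex.exp (2 * Real.pi * Complex.I * (((y : ℤ) - (x : ℤ) : ℤ) : ℂ)
      * (t : ℂ)) := fun t => by rw [hE]; push_cast; rfl
  have hEnorm : ∀ t, ‖E t‖ = 1 := fun t => by
    rw [hEint]
    exact_mod_cast norm_exp_two_pi_mul (((y : ℤ) - (x : ℤ) : ℤ) : ℝ) t
  set F : ℝ → ℂ := fun t => E t * (z * finf t / (1 + z * finf t)) with hF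
  have hden : ∀ t, (1 + z * finf t : ℂ) ≠ 0 := fun t => by
    have : (1 + z * finf t : ℝ) ≠ 0 := by have := hfinf_pos t; positivity
    exact_mod_cast this
  have hfc := continuous_limitSymbol hg_bound hτ hfinf
  have hFc : Continuous F := by
    have hEc : Continuous E := by fun_prop
    exact hEc.mul ((continuous_const.mul hfc).div (continuous_const.add
      (continuous_const.mul hfc)) hden)
  have hfper : ∀ t, finf (t + 1) = finf t := fun t => by
    have : (finf (t + 1) : ℂ) = finf t := by
      rw [hfinf, hfinf]
      exact tsum_congr fun s => by rw [exp_two_pi_int_periodic s t]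
    exact_mod_cast this
  have hFper : Function.Periodic F 1 := fun t => by
    simp only [hF, hfper, hEint]
    rw [exp_two_pi_int_periodic ((y : ℤ) - (x : ℤ)) t]
  have hint : (z : ℂ) * ∫ t in (-(1/2) : ℝ)..(1/2 : ℝ), E t * (finf t : ℂ)
      / (1 + (z : ℂ) * (finf t : ℂ)) = ∫ t in (0 : ℝ)..1, F t := by
    have h := hFper.intervalIntegral_add_eq (-(1 / 2)) 0
    rw [zero_add, show (-(1 / 2) + 1 : ℝ) = 1 / 2 by norm_num] at h
    rw [← h, ← intervalIntegral.integral_const_mul]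
    refine intervalIntegral.integral_congr fun t _ => ?_
    simp only [hF]
    ring
  rw [hint]
  -- The kernel entry differs from the Riemann sum of `F` by at most `2z` times the symbol error.
  refine (tendsto_riemannSum hFc).congr_dist ?_
  have hb : Tendsto (fun M => 2 * z * symbolError g τ M) atTop (𝓝 0) := by
    simpa using herr.const_mul (2 * z)
  refine squeeze_zero' (Eventually.of_forall fun _ => dist_nonneg) ?_ hb
  filter_upwards [hsmall, eventually_ge_atTop (max x y)] with M hM hMxy
  have hxM : x ≤ M := (le_max_left _ _).trans hMxy
  have hyM : y ≤ M := (le_max_right _ _).trans hMxy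
  have hM0 : 0 < M := hx.trans_le hxM
  have : NeZero M := ⟨hM0.ne'⟩
  have hMR : (0 : ℝ) < M := by exact_mod_cast hM0
  rw [dif_pos ⟨hxM, hyM⟩]
  have hK := (kernel_eq_symbolMatrix (hmap M) fun k => (hres M hM k).1).2
  have hent := congrFun (congrFun hK ⟨x - 1, by omega⟩) ⟨y - 1, by omega⟩
  rw [Matrix.map_apply, Complex.ofRealHom_eq_coe] at hent
  rw [hent, symbolMatrix, ← sum_zmod_val (M := M) (fun k => F ((k : ℝ) / M)), dist_comm,
    dist_eq_norm, ← mul_sub, ← Finset.sum_sub_distrib]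
  have hterm : ∀ k ∈ (Finset.univ : Finset (ZMod M)),
      ‖ZMod.stdAddChar (k * (((y - 1 : ℕ) : ZMod M) - ((x - 1 : ℕ) : ZMod M))) *
        (z * latticeSymbol g τ M k / (1 + z * latticeSymbol g τ M k))
        - F ((k.val : ℝ) / M)‖ ≤ 2 * z * symbolError g τ M := by
    intro k _
    have hchar : (ZMod.stdAddChar (k * (((y - 1 : ℕ) : ZMod M) - ((x - 1 : ℕ) : ZMod M))) : ℂ)
        = E ((k.val : ℝ) / M) := by
      rw [hEint, ← stdAddChar_intCast_mul, mul_comm]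
      congr 2
      rw [Nat.cast_sub hx, Nat.cast_sub hy]
      push_cast; ring
    rw [hchar]
    simp only [hF]
    rw [← mul_sub, norm_mul, hEnorm, one_mul]
    exact (hres M hM k).2
  rw [norm_mul, norm_inv, Complex.norm_natCast]
  have hsum := (norm_sum_le _ _).trans (Finset.sum_le_sum hterm)
  rw [Finset.sum_const, Finset.card_univ, ZMod.card, nsmul_eq_mul] at hsum
  calc (M : ℝ)⁻¹ * _ ≤ (M : ℝ)⁻¹ * (M * (2 * z * symbolError g τ M)) := by gcongr
    _ = _ := by field_simp
end

section
/- (Thermodynamic limit of the pressure on the continuum) Let g : ℝ → ℝ be an even Schwartz function whose Fourier transform λ^∞(s) := ∫_{−∞}^∞ g(t) e^{2πist} dt satisfies λ^∞(s) ≥ 0 for all s, and let z > 0. For L > 0 and p ∈ ℤ set λ_p^{(L)} := L ∫_{−1/2}^{1/2} g( (L/π) sin(πt) ) e^{2πipt} dt, and assume 1 + z λ_p^{(L)} > 0 for all L > 0 and p ∈ ℤ. Then lim_{L→∞} (1/L) Σ_{p∈ℤ} log(1 + z λ_p^{(L)}) = ∫_{−∞}^∞ log(1 + z λ^∞(s))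 ds. -/
/-!
The normalised sum `(1/L) ∑ₚ log(1 + z λ_p^{(L)})` is the integral over `ℝ` of the step function
`s ↦ log(1 + z λ_{⌊L s⌋}^{(L)})` (`tsum_eq_integral_floor`), and the limit follows from dominated
convergence.

Pointwise convergence: substituting `u = L t`, `λ_p^{(L)}` is the Fourier integral at `p/L` of
`u ↦ g((L/π) sin(πu/L))` cut off to `|u| ≤ L/2`. This profile converges to `g` in `L¹`
(`tendsto_profileDist`), so `λ_p^{(L)} - λ^∞(p/L) → 0` uniformly in `p` (`dist_eigenvalue_le`), and
`λ^∞` is continuous.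

Domination: two integrations by parts on the circle give `|λ_p^{(L)}| ≤ K / (1 + (p/L)²)` with `K`
independent of `L ≥ 1` (`sq_mul_integral_phase_le`). Since `λ^∞ ≥ 0`, the uniform convergence also
yields `z λ_p^{(L)} ≥ -1/2` for all `p` once `L` is large, where `|log(1 + x)| ≤ 2|x|`
(`abs_log_one_add_le`).
-/

open MeasureTheory Filter Topology

/-! ### Decay estimates -/

lemma schwartz_decay_sq (f : SchwartzMap ℝ ℝ) :
    ∃ C : ℝ, 0 ≤ C ∧ ∀ x : ℝ, (1 + x ^ 2) * |f x| ≤ C ∧ (1 + x ^ 2) * |x * f x| ≤ C := by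
  obtain ⟨C0, h0, H0⟩ := f.decay 0 0
  obtain ⟨C1, h1, H1⟩ := f.decay 1 0
  obtain ⟨C2, h2, H2⟩ := f.decay 2 0
  obtain ⟨C3, h3, H3⟩ := f.decay 3 0
  refine ⟨C0 + C1 + C2 + C3, by positivity, fun x => ?_⟩
  have e0 := H0 x
  have e1 := H1 x
  have e2 := H2 x
  have e3 := H3 x
  simp only [norm_iteratedFDeriv_zero, Real.norm_eq_abs] at e0 e1 e2 e3
  rw [abs_mul, ← sq_abs x]
  constructor <;> nlinarith

/-- Jordan's inequality `|sin y| ≥ (2/π)|y|` makes the chord length `(L/π)|sin(πt)|` comparable to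
the arc length `L|t|`, so quadratic decay in the chord gives quadratic decay in `L t`. -/
lemma chord_bound {F : ℝ → ℝ} {C : ℝ} (hC : 0 ≤ C) (hF : ∀ x : ℝ, (1 + x ^ 2) * |F x| ≤ C)
    {L t : ℝ} (hL : 0 < L) (ht : |t| ≤ 1 / 2) :
    |F (L / Real.pi * Real.sin (Real.pi * t))| ≤ 4 * C * (1 + (L * t) ^ 2)⁻¹ := by
  have hpi := Real.pi_pos
  have hpi4 := Real.pi_le_four
  set x := L / Real.pi * Real.sin (Real.pi * t) with hx
  have hj : 2 / Real.pi * |Real.pi * t| ≤ |Real.sin (Real.pi * t)| := by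
    apply Real.mul_abs_le_abs_sin
    rw [abs_mul, abs_of_pos hpi]
    nlinarith
  have hj' : 2 * |t| ≤ |Real.sin (Real.pi * t)| := by
    rw [abs_mul, abs_of_pos hpi] at hj
    calc 2 * |t| = 2 / Real.pi * (Real.pi * |t|) := by field_simp
      _ ≤ _ := hj
  have hxabs : |L * t| / 2 ≤ |x| := by
    rw [hx, abs_mul, abs_mul, abs_of_pos hL, abs_of_pos (div_pos hL hpi)]
    have : L / 4 ≤ L / Real.pi := div_le_div_of_nonneg_left hL.le hpi hpi4
    calc L * |t| / 2 = L / 4 * (2 * |t|) := by ring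
      _ ≤ _ := by gcongr
  have hsq : (L * t) ^ 2 / 4 ≤ x ^ 2 := by
    rw [← sq_abs x, ← sq_abs (L * t)]
    nlinarith [abs_nonneg (L * t), abs_nonneg x]
  rw [← div_eq_mul_inv, le_div_iff₀ (by positivity)]
  have := hF x
  nlinarith [abs_nonneg (F x)]

lemma integral_scaled_le {L : ℝ} :
    L * ∫ t in (-(1/2) : ℝ)..(1/2 : ℝ), (1 + (L * t) ^ 2)⁻¹ ≤ Real.pi := by
  rw [intervalIntegral.mul_integral_comp_mul_left (f := fun x => (1 + x ^ 2)⁻¹),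
    integral_inv_one_add_sq]
  have h1 := Real.arctan_lt_pi_div_two (L * (1 / 2))
  have h2 := Real.neg_pi_div_two_lt_arctan (L * (-(1 / 2)))
  linarith

lemma continuous_scaled (L : ℝ) : Continuous fun t : ℝ => (1 + (L * t) ^ 2)⁻¹ :=
  Continuous.inv₀ (by fun_prop) fun t => by positivity

lemma norm_exp_phase (a b : ℝ) :
    ‖Complex.exp (2 * Real.pi * Complex.I * (a : ℂ) * (b : ℂ))‖ = 1 := by
  have : (2 * Real.pi * Complex.I * (a : ℂ) * (b : ℂ)) =
      ((2 * Real.pi * a * b : ℝ) : ℂ) * Complex.I := by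
    push_cast; ring
  rw [this, Complex.norm_exp_ofReal_mul_I]

/-- An integral over one period against a phase is `O(1/L)` when the integrand decays
quadratically in `L t`. -/
lemma norm_integral_phase_le {φ : ℝ → ℂ} {C L : ℝ} (hL : 0 < L) (hC : 0 ≤ C)
    (h : ∀ t : ℝ, |t| ≤ 1 / 2 → ‖φ t‖ ≤ C * (1 + (L * t) ^ 2)⁻¹) (p : ℤ) :
    L * ‖∫ t in (-(1/2) : ℝ)..(1/2 : ℝ),
        φ t * Complex.exp (2 * Real.pi * Complex.I * (p : ℂ) * (t : ℂ))‖ ≤ C * Real.pi := by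
  have h1 : ‖∫ t in (-(1/2) : ℝ)..(1/2 : ℝ),
        φ t * Complex.exp (2 * Real.pi * Complex.I * (p : ℂ) * (t : ℂ))‖ ≤
      ∫ t in (-(1/2) : ℝ)..(1/2 : ℝ), C * (1 + (L * t) ^ 2)⁻¹ := by
    apply intervalIntegral.norm_integral_le_of_norm_le (by norm_num)
    · refine Eventually.of_forall fun t ht => ?_
      have := norm_exp_phase (p : ℝ) t
      rw [Complex.ofReal_intCast] at this
      rw [norm_mul, this, mul_one]
      exact h t (abs_le.2 ⟨ht.1.le, ht.2⟩)
    · exact ((continuous_scaled L).const_mul C).intervalIntegrable _ _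
  rw [intervalIntegral.integral_const_mul] at h1
  calc _ ≤ L * (C * ∫ t in (-(1/2) : ℝ)..(1/2 : ℝ), (1 + (L * t) ^ 2)⁻¹) := by gcongr
    _ = C * (L * ∫ t in (-(1/2) : ℝ)..(1/2 : ℝ), (1 + (L * t) ^ 2)⁻¹) := by ring
    _ ≤ _ := by gcongr; exact integral_scaled_le

/-! ### Integration by parts on the circle -/

lemma exp_phase_periodic (p : ℤ) :
    Complex.exp (2 * Real.pi * Complex.I * (p : ℂ) * ((1/2 : ℝ) : ℂ)) =
    Complex.exp (2 * Real.pi * Complex.I * (p : ℂ) * ((-(1/2) : ℝ) : ℂ)) := by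
  rw [Complex.exp_eq_exp_iff_exists_int]
  exact ⟨p, by push_cast; ring⟩

lemma integral_deriv_phase {φ φ' : ℝ → ℂ} (hφ : ∀ t, HasDerivAt φ (φ' t) t)
    (hc : Continuous φ') (hper : φ (1/2) = φ (-(1/2))) (p : ℤ) :
    ∫ t in (-(1/2) : ℝ)..(1/2 : ℝ),
        φ' t * Complex.exp (2 * Real.pi * Complex.I * (p : ℂ) * (t : ℂ)) =
      -(2 * Real.pi * Complex.I * p) * ∫ t in (-(1/2) : ℝ)..(1/2 : ℝ),
        φ t * Complex.exp (2 * Real.pi * Complex.I * (p : ℂ) * (t : ℂ)) := by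
  have hd : ∀ t : ℝ, HasDerivAt
      (fun t : ℝ => Complex.exp (2 * Real.pi * Complex.I * (p : ℂ) * (t : ℂ)))
      (Complex.exp (2 * Real.pi * Complex.I * (p : ℂ) * (t : ℂ)) *
        (2 * Real.pi * Complex.I * (p : ℂ))) t := by
    intro t
    have h1 : HasDerivAt (fun t : ℝ => 2 * Real.pi * Complex.I * (p : ℂ) * (t : ℂ))
        (2 * Real.pi * Complex.I * (p : ℂ)) t := by
      simpa using (Complex.ofRealCLM.hasDerivAt (x := t)).const_mul
        (2 * Real.pi * Complex.I * (p : ℂ))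
    exact h1.cexp
  have key := intervalIntegral.integral_mul_deriv_eq_deriv_mul
    (a := -(1/2)) (b := 1/2) (u := φ) (u' := φ')
    (fun t _ => hφ t) (fun t _ => hd t) (hc.intervalIntegrable _ _)
    (Continuous.intervalIntegrable (by fun_prop) _ _)
  rw [exp_phase_periodic, hper, sub_self, zero_sub] at key
  rw [← neg_eq_iff_eq_neg.2 key, ← intervalIntegral.integral_const_mul,
    ← intervalIntegral.integral_neg]
  congr 1
  ext t
  ring

/-- Uniform quadratic decay of the eigenvalues in the rescaled frequency `p / L`. Two integrations
by parts leave no boundary terms: `t ↦ g((L/π) sin(πt))` takes equal values at `±1/2` because `g` is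
even, and its derivative vanishes there because of the factor `cos(πt)`. -/
lemma sq_mul_integral_phase_le {g : SchwartzMap ℝ ℝ} (hg_even : ∀ u : ℝ, g (-u) = g u) :
    ∃ K : ℝ, 0 ≤ K ∧ ∀ L : ℝ, 1 ≤ L → ∀ p : ℤ,
      (1 + ((p : ℝ) / L) ^ 2) * (L * ‖∫ t in (-(1/2) : ℝ)..(1/2 : ℝ),
        (g ((L / Real.pi) * Real.sin (Real.pi * t)) : ℂ) *
          Complex.exp (2 * Real.pi * Complex.I * (p : ℂ) * (t : ℂ))‖) ≤ K := by
  set g1 := SchwartzMap.derivCLM ℝ ℝ g with hg1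
  set g2 := SchwartzMap.derivCLM ℝ ℝ g1 with hg2
  have hd0 : ∀ x, HasDerivAt g (g1 x) x := fun x => by
    rw [hg1, SchwartzMap.derivCLM_apply]; exact g.differentiableAt.hasDerivAt
  have hd1 : ∀ x, HasDerivAt g1 (g2 x) x := fun x => by
    rw [hg2, SchwartzMap.derivCLM_apply]; exact g1.differentiableAt.hasDerivAt
  obtain ⟨A, hA, HA⟩ := schwartz_decay_sq g
  obtain ⟨B, hB, HB⟩ := schwartz_decay_sq g1
  obtain ⟨C, hC, HC⟩ := schwartz_decay_sq g2
  have hpi := Real.pi_pos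
  refine ⟨4 * A * Real.pi + 4 * (C + Real.pi ^ 2 * B) * Real.pi, by positivity, ?_⟩
  intro L hL1 p
  have hL : 0 < L := by linarith
  set x : ℝ → ℝ := fun t => L / Real.pi * Real.sin (Real.pi * t) with hx
  have hxd : ∀ t, HasDerivAt x (L * Real.cos (Real.pi * t)) t := by
    intro t
    have h1 : HasDerivAt (fun t => Real.pi * t) Real.pi t := by
      simpa using (hasDerivAt_id t).const_mul Real.pi
    exact (h1.sin.const_mul (L / Real.pi)).congr_deriv (by field_simp)
  have hcd : ∀ t, HasDerivAt (fun t => L * Real.cos (Real.pi * t)) (-(Real.pi ^ 2 * x t)) t := by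
    intro t
    have h1 : HasDerivAt (fun t => Real.pi * t) Real.pi t := by
      simpa using (hasDerivAt_id t).const_mul Real.pi
    exact (h1.cos.const_mul L).congr_deriv (by simp only [hx]; field_simp)
  have hφ : ∀ t, HasDerivAt (fun t => (g (x t) : ℂ))
      ((g1 (x t) * (L * Real.cos (Real.pi * t)) : ℝ) : ℂ) t := fun t =>
    ((hd0 (x t)).comp t (hxd t)).ofReal_comp
  have hφ' : ∀ t, HasDerivAt (fun t => ((g1 (x t) * (L * Real.cos (Real.pi * t)) : ℝ) : ℂ))
      ((g2 (x t) * (L * Real.cos (Real.pi * t)) * (L * Real.cos (Real.pi * t)) +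
        g1 (x t) * (-(Real.pi ^ 2 * x t)) : ℝ) : ℂ) t := fun t =>
    (((hd1 (x t)).comp t (hxd t)).mul (hcd t)).ofReal_comp
  have hxc : Continuous x := by fun_prop
  have c1 := g1.continuous
  have c2 := g2.continuous
  have i1 := integral_deriv_phase hφ (by fun_prop) (by
    have : x (1/2) = -x (-(1/2)) := by
      simp only [hx]
      rw [mul_neg, Real.sin_neg]; ring
    simp only [this, hg_even]) p
  have i2 := integral_deriv_phase hφ' (by fun_prop) (by
    have e1 : Real.cos (Real.pi * (1/2)) = 0 := by
      rw [mul_one_div, Real.cos_pi_div_two]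
    have e2 : Real.cos (Real.pi * (-(1/2))) = 0 := by
      rw [mul_neg, Real.cos_neg, e1]
    simp only [e1, e2, mul_zero]) p
  rw [i1] at i2
  have b0 := norm_integral_phase_le (φ := fun t => (g (x t) : ℂ)) hL (by positivity : 0 ≤ 4 * A)
    (fun t ht => by
      rw [Complex.norm_real, Real.norm_eq_abs]
      exact chord_bound hA (fun y => (HA y).1) hL ht) p
  have b2 := norm_integral_phase_le (C := L ^ 2 * (4 * (C + Real.pi ^ 2 * B))) hL (by positivity)
    (φ := fun t => ((g2 (x t) * (L * Real.cos (Real.pi * t)) * (L * Real.cos (Real.pi * t)) +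
        g1 (x t) * (-(Real.pi ^ 2 * x t)) : ℝ) : ℂ))
    (fun t ht => by
      rw [Complex.norm_real, Real.norm_eq_abs]
      have f1 := chord_bound hC (fun y => (HC y).1) hL ht
      have f2 := chord_bound (F := fun y => y * g1 y) hB (fun y => (HB y).2) hL ht
      have hcos : Real.cos (Real.pi * t) ^ 2 ≤ 1 := Real.cos_sq_le_one _
      have hL2 : 1 ≤ L ^ 2 := by nlinarith
      calc _ = |L ^ 2 * Real.cos (Real.pi * t) ^ 2 * g2 (x t)
              + -(Real.pi ^ 2 * (x t * g1 (x t)))| := by congr 1; ring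
        _ ≤ |L ^ 2 * Real.cos (Real.pi * t) ^ 2 * g2 (x t)|
              + |-(Real.pi ^ 2 * (x t * g1 (x t)))| := abs_add_le _ _
        _ = L ^ 2 * Real.cos (Real.pi * t) ^ 2 * |g2 (x t)|
              + 1 * Real.pi ^ 2 * |x t * g1 (x t)| := by
            rw [abs_neg, abs_mul, abs_mul (Real.pi ^ 2),
              abs_of_nonneg (by positivity : 0 ≤ L ^ 2 * Real.cos (Real.pi * t) ^ 2),
              abs_of_nonneg (by positivity : 0 ≤ Real.pi ^ 2), one_mul]
        _ ≤ L ^ 2 * 1 * (4 * C * (1 + (L * t) ^ 2)⁻¹)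
              + L ^ 2 * Real.pi ^ 2 * (4 * B * (1 + (L * t) ^ 2)⁻¹) := by
            gcongr
        _ = _ := by ring) p
  rw [i2, ← mul_assoc, norm_mul] at b2
  have hn : ‖-(2 * Real.pi * Complex.I * (p : ℂ)) * -(2 * Real.pi * Complex.I * (p : ℂ))‖ =
      4 * Real.pi ^ 2 * (p : ℝ) ^ 2 := by
    rw [neg_mul_neg, norm_mul]
    simp only [norm_mul, Complex.norm_I, Complex.norm_real, Complex.norm_intCast,
      Complex.norm_ofNat, Real.norm_eq_abs, abs_of_pos hpi]
    rw [← sq_abs (p : ℝ)]; ring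
  rw [hn] at b2
  set N := ‖∫ t in (-(1/2) : ℝ)..(1/2 : ℝ),
        (g (x t) : ℂ) * Complex.exp (2 * Real.pi * Complex.I * (p : ℂ) * (t : ℂ))‖
  have hN : 0 ≤ N := norm_nonneg _
  have b3 : ((p : ℝ) / L) ^ 2 * (L * N) ≤ 4 * (C + Real.pi ^ 2 * B) * Real.pi := by
    rw [div_pow, div_mul_eq_mul_div, div_le_iff₀ (by positivity)]
    have : 1 ≤ 4 * Real.pi ^ 2 := by nlinarith [Real.pi_gt_three]
    calc (p : ℝ) ^ 2 * (L * N) = 1 * ((p : ℝ) ^ 2 * (L * N)) := by ring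
      _ ≤ 4 * Real.pi ^ 2 * ((p : ℝ) ^ 2 * (L * N)) := by gcongr
      _ = L * (4 * Real.pi ^ 2 * (p : ℝ) ^ 2 * N) := by ring
      _ ≤ _ := b2
      _ = _ := by ring
  change (1 + ((p : ℝ) / L) ^ 2) * (L * N) ≤ _
  rw [add_mul, one_mul]
  exact add_le_add b0 b3

/-! ### Comparison with the Fourier transform on the line -/

/-- The function of the arc length `u = L t` whose Fourier integral at `p / L` is `λ_p^{(L)}`,
extended by zero to the whole line. -/
noncomputable def chordProfile (g : SchwartzMap ℝ ℝ) (L : ℝ) : ℝ → ℝ :=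
  (Set.Ioc (L * (-(1/2))) (L * (1/2))).indicator
    fun u => g (L / Real.pi * Real.sin (Real.pi * (u / L)))

lemma measurable_chordProfile (g : SchwartzMap ℝ ℝ) (L : ℝ) : Measurable (chordProfile g L) := by
  have c := g.continuous
  refine Measurable.indicator ?_ measurableSet_Ioc
  exact Continuous.measurable (by fun_prop)

lemma chordProfile_bound (g : SchwartzMap ℝ ℝ) :
    ∃ C : ℝ, 0 ≤ C ∧ (∀ u, |g u| ≤ C * (1 + u ^ 2)⁻¹) ∧
      ∀ L : ℝ, 0 < L → ∀ u, |chordProfile g L u| ≤ C * (1 + u ^ 2)⁻¹ := by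
  obtain ⟨A, hA, HA⟩ := schwartz_decay_sq g
  refine ⟨4 * A, by positivity, fun u => ?_, fun L hL u => ?_⟩
  · rw [← div_eq_mul_inv, le_div_iff₀ (by positivity)]
    linarith [(HA u).1]
  · unfold chordProfile
    by_cases hu : u ∈ Set.Ioc (L * (-(1/2))) (L * (1/2))
    · rw [Set.indicator_of_mem hu]
      have := chord_bound hA (fun y => (HA y).1) hL (t := u / L) (by
        rw [abs_div, abs_of_pos hL, div_le_iff₀ hL, abs_le]
        constructor <;> linarith [hu.1, hu.2])
      rwa [mul_div_cancel₀ _ hL.ne'] at this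
    · rw [Set.indicator_of_notMem hu, abs_zero]
      positivity

lemma tendsto_chordProfile (g : SchwartzMap ℝ ℝ) (u : ℝ) :
    Tendsto (fun L => chordProfile g L u) atTop (𝓝 (g u)) := by
  have h1 : Tendsto (fun L : ℝ => Real.pi * (u / L)) atTop (𝓝 0) := by
    simpa using (tendsto_id.const_div_atTop u).const_mul Real.pi
  have h2 : Tendsto (fun L : ℝ => u * Real.sinc (Real.pi * (u / L))) atTop (𝓝 u) := by
    have := (Real.continuous_sinc.tendsto 0).comp h1
    rw [Real.sinc_zero] at this
    simpa using this.const_mul u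
  have h3 := (g.continuous.tendsto u).comp h2
  refine h3.congr' ?_
  filter_upwards [eventually_gt_atTop (0 : ℝ), eventually_gt_atTop (2 * |u|)] with L hL hLu
  have hm : u ∈ Set.Ioc (L * (-(1/2))) (L * (1/2)) := by
    constructor <;> linarith [le_abs_self u, neg_abs_le u]
  simp only [chordProfile, Set.indicator_of_mem hm, Function.comp_apply]
  congr 1
  rcases eq_or_ne u 0 with rfl | hu
  · simp
  · have hpi := Real.pi_pos.ne'
    rw [Real.sinc_of_ne_zero (by positivity)]
    field_simp

/-- The `L¹` distance between the profile and `g`, which bounds the difference of their Fourier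
integrals uniformly in the frequency. -/
noncomputable def profileDist (g : SchwartzMap ℝ ℝ) (L : ℝ) : ℝ :=
  ∫ u, |chordProfile g L u - g u|

lemma tendsto_profileDist (g : SchwartzMap ℝ ℝ) :
    Tendsto (profileDist g) atTop (𝓝 0) := by
  obtain ⟨C, hC, Hg, Hp⟩ := chordProfile_bound g
  have h0 : ∫ _ : ℝ, (0 : ℝ) = 0 := by simp
  rw [← h0]
  refine tendsto_integral_filter_of_dominated_convergence
    (fun u => 2 * C * (1 + u ^ 2)⁻¹) ?_ ?_ (integrable_inv_one_add_sq.const_mul _) ?_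
  · exact Eventually.of_forall fun L =>
      (((measurable_chordProfile g L).sub g.continuous.measurable).abs).aestronglyMeasurable
  · filter_upwards [eventually_gt_atTop (0 : ℝ)] with L hL
    refine Eventually.of_forall fun u => ?_
    rw [Real.norm_eq_abs, abs_abs]
    calc _ ≤ |chordProfile g L u| + |g u| := abs_sub _ _
      _ ≤ _ := by linarith [Hg u, Hp L hL u]
  · refine Eventually.of_forall fun u => ?_
    have := ((tendsto_chordProfile g u).sub_const (g u)).abs
    simpa using this

/-- After the substitution `u = L t`, both terms are Fourier integrals at the frequency `p / L`, of
the profile and of `g` respectively. -/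
lemma dist_eigenvalue_le (g : SchwartzMap ℝ ℝ) {L : ℝ} (hL : 0 < L) (p : ℤ) :
    ‖(L : ℂ) * (∫ t in (-(1/2) : ℝ)..(1/2 : ℝ),
        (g ((L / Real.pi) * Real.sin (Real.pi * t)) : ℂ) *
          Complex.exp (2 * Real.pi * Complex.I * (p : ℂ) * (t : ℂ))) -
      ∫ t : ℝ, (g t : ℂ) *
        Complex.exp (2 * Real.pi * Complex.I * (((p : ℝ) / L : ℝ) : ℂ) * (t : ℂ))‖
      ≤ profileDist g L := by
  obtain ⟨C, hC, Hg, Hp⟩ := chordProfile_bound g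
  set e : ℝ → ℂ := fun u =>
    Complex.exp (2 * Real.pi * Complex.I * (((p : ℝ) / L : ℝ) : ℂ) * (u : ℂ)) with he
  have hec : Continuous e := by fun_prop
  have hen : ∀ u, ‖e u‖ = 1 := fun u => norm_exp_phase _ _
  have hcv : (L : ℂ) * (∫ t in (-(1/2) : ℝ)..(1/2 : ℝ),
        (g ((L / Real.pi) * Real.sin (Real.pi * t)) : ℂ) *
          Complex.exp (2 * Real.pi * Complex.I * (p : ℂ) * (t : ℂ))) =
      ∫ u, (chordProfile g L u : ℂ) * e u := by
    have := intervalIntegral.smul_integral_comp_mul_left (a := -(1/2)) (b := 1/2)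
      (fun u : ℝ => (g ((L / Real.pi) * Real.sin (Real.pi * (u / L))) : ℂ) * e u) L
    rw [Complex.real_smul] at this
    have hLC : (L : ℂ) ≠ 0 := by exact_mod_cast hL.ne'
    calc _ = _ := by
            congr 2
            ext t
            rw [mul_div_cancel_left₀ _ hL.ne']
            congr 2
            push_cast
            field_simp
      _ = _ := this
      _ = ∫ u in Set.Ioc (L * (-(1/2))) (L * (1/2)), _ :=
            intervalIntegral.integral_of_le (by linarith)
      _ = _ := by
            rw [← integral_indicator measurableSet_Ioc]
            congr 1
            ext u
            by_cases hu : u ∈ Set.Ioc (L * (-(1/2))) (L * (1/2)) <;>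
              simp only [chordProfile, Set.indicator, hu, if_true, if_false, Complex.ofReal_zero,
                zero_mul]
  have hi : ∀ f : ℝ → ℝ, Measurable f → (∀ u, |f u| ≤ C * (1 + u ^ 2)⁻¹) →
      Integrable fun u => (f u : ℂ) * e u := by
    intro f hf hb
    refine (integrable_inv_one_add_sq.const_mul C).mono' ?_ (Eventually.of_forall fun u => ?_)
    · exact ((Complex.measurable_ofReal.comp hf).mul hec.measurable).aestronglyMeasurable
    · rw [norm_mul, hen, mul_one, Complex.norm_real]
      exact hb u
  rw [hcv, ← integral_sub (hi _ (measurable_chordProfile g L) (Hp L hL))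
    (hi _ g.continuous.measurable Hg)]
  refine (norm_integral_le_integral_norm _).trans (le_of_eq ?_)
  unfold profileDist
  congr 1
  ext u
  rw [← sub_mul, norm_mul, hen, mul_one, ← Complex.ofReal_sub, Complex.norm_real,
    Real.norm_eq_abs]

lemma continuous_laminf (g : SchwartzMap ℝ ℝ) (laminf : ℝ → ℝ)
    (hlaminf : ∀ s : ℝ, (laminf s : ℂ) =
      ∫ t : ℝ, (g t : ℂ) * Complex.exp (2 * Real.pi * Complex.I * (s : ℂ) * (t : ℂ))) :
    Continuous laminf := by
  have c := g.continuous
  have h : Continuous fun s : ℝ => (laminf s : ℂ) := by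
    simp_rw [hlaminf]
    refine continuous_of_dominated (bound := fun t => |g t|) ?_ ?_ g.integrable.abs ?_
    · exact fun s => Continuous.aestronglyMeasurable (by fun_prop)
    · refine fun s => Eventually.of_forall fun t => ?_
      rw [norm_mul, norm_exp_phase, mul_one, Complex.norm_real, Real.norm_eq_abs]
    · exact Eventually.of_forall fun t => by fun_prop
  exact (Complex.continuous_re.comp h).congr fun s => by simp

/-! ### Sums as integrals of step functions -/

lemma tendsto_floor_div (s : ℝ) :
    Tendsto (fun L : ℝ => ((⌊L * s⌋ : ℤ) : ℝ) / L) atTop (𝓝 s) := by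
  have h : Tendsto (fun L : ℝ => s - 1 / L) atTop (𝓝 s) := by
    simpa using (tendsto_id.const_div_atTop (1 : ℝ)).const_sub s
  refine tendsto_of_tendsto_of_tendsto_of_le_of_le' h tendsto_const_nhds ?_ ?_
  · filter_upwards [eventually_gt_atTop (0 : ℝ)] with L hL
    rw [le_div_iff₀ hL, sub_mul, one_div, inv_mul_cancel₀ hL.ne']
    linarith [Int.lt_floor_add_one (L * s)]
  · filter_upwards [eventually_gt_atTop (0 : ℝ)] with L hL
    rw [div_le_iff₀ hL]
    linarith [Int.floor_le (L * s)]

/-- A sum over `ℤ` with mesh `1/L` is the integral of the step function `s ↦ a ⌊L s⌋`. -/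
lemma tsum_eq_integral_floor (a : ℤ → ℝ) {L : ℝ} (hL : 0 < L)
    (hi : Integrable fun s : ℝ => a ⌊L * s⌋) :
    (1 / L) * ∑' p : ℤ, a p = ∫ s : ℝ, a ⌊L * s⌋ := by
  have hi' : Integrable fun x : ℝ => a ⌊x⌋ :=
    (integrable_comp_mul_left_iff (fun x : ℝ => a ⌊x⌋) hL.ne').1 hi
  rw [Measure.integral_comp_mul_left (fun x : ℝ => a ⌊x⌋) L, abs_of_pos (inv_pos.2 hL),
    smul_eq_mul, one_div, ← hi'.hasSum_intervalIntegral_comp_add_int.tsum_eq]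
  congr 2
  ext p
  have : ∫ x in (0 : ℝ)..1, a ⌊x + (p : ℝ)⌋ = ∫ x in (0 : ℝ)..1, a p := by
    refine intervalIntegral.integral_congr_Ioo_of_le zero_le_one fun x hx => ?_
    have : ⌊x⌋ = 0 := Int.floor_eq_zero_iff.2 ⟨hx.1.le, hx.2⟩
    simp only [Int.floor_add_intCast, this, zero_add]
  rw [this]
  simp

lemma abs_log_one_add_le {x : ℝ} (hx : -(1/2) ≤ x) : |Real.log (1 + x)| ≤ 2 * |x| := by
  have hp : 0 < 1 + x := by linarith
  rw [abs_le]
  constructor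
  · have h := Real.one_sub_inv_le_log_of_pos hp
    have h2 : -(2 * |x|) ≤ 1 - (1 + x)⁻¹ := by
      have : 1 - (1 + x)⁻¹ = x / (1 + x) := by field_simp; ring
      rw [this, le_div_iff₀ hp]
      nlinarith [abs_nonneg x, neg_abs_le x]
    linarith
  · have h := Real.log_le_sub_one_of_pos hp
    linarith [le_abs_self x, abs_nonneg x]

/-- thermodynamic limit of the pressure on the continuum: for `g` an even real
Schwartz function with nonnegative Fourier transform `λ^∞(s) = ∫ g(t) e^{2πist} dt`, fugacity
`z > 0`, and eigenvalues `λ_p^{(L)} = L ∫_{-1/2}^{1/2} g((L/π) sin(πt)) e^{2πipt} dt` satisfying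
`1 + zλ_p^{(L)} > 0`, one has
`lim_{L→∞} (1/L) Σ_{p∈ℤ} log(1 + zλ_p^{(L)}) = ∫_{-∞}^∞ log(1 + zλ^∞(s)) ds`. -/
theorem continuum_thermodynamic_limit_pressure (g : SchwartzMap ℝ ℝ)
    (hg_even : ∀ u : ℝ, g (-u) = g u)
    (laminf : ℝ → ℝ)
    (hlaminf : ∀ s : ℝ, (laminf s : ℂ) =
      ∫ t : ℝ, (g t : ℂ) * Complex.exp (2 * Real.pi * Complex.I * (s : ℂ) * (t : ℂ)))
    (hlaminf_pos : ∀ s : ℝ, 0 ≤ laminf s)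
    (z : ℝ) (hz : 0 < z)
    (lamL : ℝ → ℤ → ℝ)
    (hlamL : ∀ (L : ℝ) (p : ℤ), (lamL L p : ℂ) =
      (L : ℂ) * ∫ t in (-(1/2) : ℝ)..(1/2 : ℝ),
        (g ((L / Real.pi) * Real.sin (Real.pi * t)) : ℂ) *
          Complex.exp (2 * Real.pi * Complex.I * (p : ℂ) * (t : ℂ)))
    (hpos : ∀ L : ℝ, 0 < L → ∀ p : ℤ, 0 < 1 + z * lamL L p) :
    Tendsto (fun L : ℝ => (1 / L) * ∑' p : ℤ, Real.log (1 + z * lamL L p))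
      atTop
      (𝓝 (∫ s : ℝ, Real.log (1 + z * laminf s))) := by
  obtain ⟨K, hK, HK⟩ := sq_mul_integral_phase_le hg_even
  have hbound : ∀ L : ℝ, 1 ≤ L → ∀ p : ℤ, (1 + ((p : ℝ) / L) ^ 2) * |lamL L p| ≤ K := by
    intro L hL p
    have h := HK L hL p
    have hn : |lamL L p| = ‖(lamL L p : ℂ)‖ := by rw [Complex.norm_real, Real.norm_eq_abs]
    rwa [hn, hlamL, norm_mul, Complex.norm_real, Real.norm_eq_abs,
      abs_of_pos (by linarith : 0 < L)]
  have hdist : ∀ L : ℝ, 0 < L → ∀ p : ℤ, |lamL L p - laminf (p / L)| ≤ profileDist g L := by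
    intro L hL p
    have h := dist_eigenvalue_le g hL p
    rwa [← hlamL, ← hlaminf, ← Complex.ofReal_sub, Complex.norm_real, Real.norm_eq_abs] at h
  have hcont := continuous_laminf g laminf hlaminf
  have hD := tendsto_profileDist g
  -- Uniform closeness to `laminf ≥ 0` keeps the argument of the logarithm above `1/2`.
  have hhalf : ∀ᶠ L : ℝ in atTop, ∀ p : ℤ, -(1/2) ≤ z * lamL L p := by
    filter_upwards [hD.eventually_lt_const (by positivity : 0 < 1 / (2 * z)),
      eventually_gt_atTop (0 : ℝ)] with L hL hL0 p
    have h1 := (abs_le.1 (hdist L hL0 p)).1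
    have h2 := hlaminf_pos (p / L)
    have h3 : -(1 / (2 * z)) ≤ lamL L p := by linarith
    calc -(1/2) = z * -(1 / (2 * z)) := by field_simp
      _ ≤ _ := by gcongr
  have hdom : ∀ᶠ L : ℝ in atTop, ∀ s : ℝ,
      ‖Real.log (1 + z * lamL L ⌊L * s⌋)‖ ≤ 10 * z * K * (1 + s ^ 2)⁻¹ := by
    filter_upwards [hhalf, eventually_ge_atTop (1 : ℝ)] with L hL hL1 s
    have hL0 : 0 < L := by linarith
    have h1 := abs_log_one_add_le (hL ⌊L * s⌋)
    have h2 := hbound L hL1 ⌊L * s⌋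
    set q : ℝ := ((⌊L * s⌋ : ℤ) : ℝ) / L with hq
    have hq1 : q ≤ s := by
      rw [hq, div_le_iff₀ hL0]; linarith [Int.floor_le (L * s)]
    have hq2 : s ≤ q + 1 := by
      have : L * s ≤ ⌊L * s⌋ + L := by linarith [Int.lt_floor_add_one (L * s)]
      have h3 : s ≤ ((⌊L * s⌋ : ℤ) + L) / L := by rw [le_div_iff₀ hL0]; linarith
      rwa [add_div, div_self hL0.ne'] at h3
    have hs : 1 + s ^ 2 ≤ 5 * (1 + q ^ 2) := by
      nlinarith [sq_nonneg (s - 2 * q), mul_nonneg (sub_nonneg.2 hq1) (sub_nonneg.2 hq2)]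
    rw [abs_mul, abs_of_pos hz] at h1
    rw [Real.norm_eq_abs, ← div_eq_mul_inv, le_div_iff₀ (by positivity)]
    calc _ ≤ 2 * (z * |lamL L ⌊L * s⌋|) * (5 * (1 + q ^ 2)) := by gcongr
      _ = 10 * z * ((1 + q ^ 2) * |lamL L ⌊L * s⌋|) := by ring
      _ ≤ _ := by gcongr
  have hmeas : ∀ L : ℝ, AEStronglyMeasurable
      (fun s : ℝ => Real.log (1 + z * lamL L ⌊L * s⌋)) := fun L =>
    ((measurable_from_top (f := fun p : ℤ => Real.log (1 + z * lamL L p))).comp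
      (Int.measurable_floor.comp (measurable_const_mul L))).aestronglyMeasurable
  have hint : Integrable fun s : ℝ => 10 * z * K * (1 + s ^ 2)⁻¹ :=
    integrable_inv_one_add_sq.const_mul _
  have hlim : Tendsto (fun L : ℝ => ∫ s : ℝ, Real.log (1 + z * lamL L ⌊L * s⌋)) atTop
      (𝓝 (∫ s : ℝ, Real.log (1 + z * laminf s))) := by
    refine tendsto_integral_filter_of_dominated_convergence _ (Eventually.of_forall hmeas)
      (hdom.mono fun L hL => Eventually.of_forall hL) hint (Eventually.of_forall fun s => ?_)
    have h1 : Tendsto (fun L : ℝ => laminf (((⌊L * s⌋ : ℤ) : ℝ) / L)) atTop (𝓝 (laminf s)) :=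
      (hcont.tendsto s).comp (tendsto_floor_div s)
    have h2 : Tendsto (fun L : ℝ => lamL L ⌊L * s⌋ - laminf (((⌊L * s⌋ : ℤ) : ℝ) / L)) atTop
        (𝓝 0) := by
      refine squeeze_zero_norm' ?_ hD
      filter_upwards [eventually_gt_atTop (0 : ℝ)] with L hL
      exact hdist L hL _
    have h3 : Tendsto (fun L : ℝ => lamL L ⌊L * s⌋) atTop (𝓝 (laminf s)) := by
      simpa using h2.add h1
    refine ((h3.const_mul z).const_add 1).log ?_
    have := mul_nonneg hz.le (hlaminf_pos s)
    linarith
  refine hlim.congr' ?_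
  filter_upwards [hdom, eventually_gt_atTop (0 : ℝ)] with L hL hL0
  exact (tsum_eq_integral_floor (fun p => Real.log (1 + z * lamL L p)) hL0
    (hint.mono' (hmeas L) (Eventually.of_forall hL))).symm
end
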